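/- arXiv:2103.04012 — 8 statements merged into one kernel-verified Lean document; each statement's English description precedes it below -/
import Mathlib

section
/- Let K be a compact Hausdorff space, X a complex Banach space, and S a closed subspace of the Banach space C(K,X) of continuous X-valued functions with the supremum norm. Let A := {x* ∘ f : f ∈ S, x* ∈ X*}. If L ⊆ K is a closed subset such that every φ ∈ A attains its supremum norm on L (i.e., for every φ ∈ A there exists t ∈ L with |φ(t)| = sup_{s∈K}|φ(s)|), then for every f ∈ S one has sup_{t∈L} ‖f(t)‖_X = sup_{t∈K} ‖f(t)‖_X; in particular the restriction map f ↦ f|_L is an isometry. -/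
set_option maxHeartbeats 1000000
set_option synthInstance.maxHeartbeats 1000000

/- STATEMENT 2: If `S` is a closed subspace of `C(K,X)`, `A = {x* ∘ f : f ∈ S, x* ∈ X*}`,
and `L ⊆ K` is a closed subset on which every element of `A` attains its supremum norm,
then for every `f ∈ S` the supremum of `‖f t‖` over `L` equals `‖f‖`; in particular
the restriction map `f ↦ f|_L` is an isometry. -/
theorem stmt_2 {K : Type*} [TopologicalSpace K] [CompactSpace K] [T2Space K]
    {X : Type*} [NormedAddCommGroup X] [NormedSpace ℂ X] [CompleteSpace X]
    (S : Submodule ℂ C(K, X)) (hSclosed : IsClosed (S : Set C(K, X)))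
    (L : Set K) (hLclosed : IsClosed L)
    (hLbd : ∀ g : C(K, ℂ), (∃ f ∈ S, ∃ φ : X →L[ℂ] ℂ, ∀ t : K, g t = φ (f t)) →
      ∃ t ∈ L, ‖g t‖ = ‖g‖) :
    (∀ f ∈ S, (⨆ t ∈ L, ‖f t‖) = ‖f‖) ∧
    (∀ f ∈ S, ∀ g ∈ S, (⨆ t ∈ L, ‖f t - g t‖) = ‖f - g‖) := by
  have key : ∀ f ∈ S, (⨆ t ∈ L, ‖f t‖) = ‖f‖ := by
    intro f hf
    have hle : ∀ t, (⨆ (_ : t ∈ L), ‖f t‖) ≤ ‖f‖ := fun t =>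
      Real.iSup_le (fun _ => f.norm_coe_le_norm t) (norm_nonneg _)
    have hbdd : BddAbove (Set.range fun t => ⨆ (_ : t ∈ L), ‖f t‖) := by
      refine ⟨‖f‖, ?_⟩
      rintro _ ⟨t, rfl⟩
      exact hle t
    apply le_antisymm
    · exact Real.iSup_le hle (norm_nonneg _)
    · refine (ContinuousMap.norm_le _
        (Real.iSup_nonneg fun t => Real.iSup_nonneg fun _ => norm_nonneg _)).2 fun s => ?_
      obtain ⟨φ, hφ, hs⟩ := exists_dual_vector'' ℂ (f s)
      obtain ⟨t, ht, hg⟩ := hLbd ⟨fun t => φ (f t), by fun_prop⟩ ⟨f, hf, φ, fun _ => rfl⟩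
      have h1 := ContinuousMap.norm_coe_le_norm (⟨fun t => φ (f t), by fun_prop⟩ : C(K, ℂ)) s
      rw [← hg] at h1
      simp only [ContinuousMap.coe_mk, hs] at h1
      have h2 : ‖f s‖ ≤ ‖φ (f t)‖ := by simpa using h1
      have h3 : ‖φ (f t)‖ ≤ ‖f t‖ := by
        simpa using φ.le_of_opNorm_le hφ (f t)
      have h4 := le_ciSup hbdd t
      have h5 : (⨆ (_ : t ∈ L), ‖f t‖) = ‖f t‖ := by simp [ht]
      simp only [h5] at h4
      exact h2.trans (h3.trans h4)
  exact ⟨key, fun f hf g hg => by simpa using key (f - g) (S.sub_mem hf hg)⟩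
end

section
/- Let A be a uniform algebra on a compact Hausdorff space K, and let Γ ⊆ K be a closed boundary for A in which the set of strong boundary points of A is dense (these properties hold for the Shilov boundary of A). If t₀ is an isolated point of Γ (i.e., there is an open set U ⊆ K with U ∩ Γ = {t₀}), then there exists φ ∈ A such that φ(t₀) = ‖φ‖_∞ = 1 and φ(t) = 0 for every t ∈ Γ∖{t₀}. -/
set_option maxHeartbeats 1000000
set_option synthInstance.maxHeartbeats 1000000

/-- `t₀` is a strong boundary point for the algebra `A ⊆ C(K,ℂ)`: for every open
neighborhood `U` of `t₀` there is `f ∈ A` with `f t₀ = ‖f‖ = 1` and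
`sup_{t ∈ K∖U} |f t| < 1`. -/
def IsStrongBoundaryPoint {K : Type*} [TopologicalSpace K] [CompactSpace K]
    (A : Subalgebra ℂ C(K, ℂ)) (t₀ : K) : Prop :=
  ∀ U : Set K, IsOpen U → t₀ ∈ U →
    ∃ f ∈ A, f t₀ = 1 ∧ ‖f‖ = 1 ∧ ∃ c : ℝ, c < 1 ∧ ∀ t ∉ U, ‖f t‖ ≤ c

/- STATEMENT 3: Let `A` be a uniform algebra on a compact Hausdorff space `K` and
`Γ` a closed boundary for `A` in which the strong boundary points of `A` are dense.
If `t₀` is an isolated point of `Γ` (witnessed by an open `U ⊆ K` with `U ∩ Γ = {t₀}`),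
then there is `φ ∈ A` with `φ t₀ = ‖φ‖ = 1` and `φ ≡ 0` on `Γ ∖ {t₀}`. -/
theorem stmt_3 {K : Type*} [TopologicalSpace K] [CompactSpace K] [T2Space K]
    (A : Subalgebra ℂ C(K, ℂ)) (hAclosed : IsClosed (A : Set C(K, ℂ)))
    (hAsep : ∀ s t : K, s ≠ t → ∃ f ∈ A, f s ≠ f t)
    (Γ : Set K) (hΓclosed : IsClosed Γ)
    (hΓbd : ∀ f ∈ A, ∃ t ∈ Γ, ‖f t‖ = ‖f‖)
    (hΓdense : Γ ⊆ closure {t | t ∈ Γ ∧ IsStrongBoundaryPoint A t})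
    (t₀ : K) (U : Set K) (hUopen : IsOpen U) (hUiso : U ∩ Γ = {t₀}) :
    ∃ φ ∈ A, φ t₀ = 1 ∧ ‖φ‖ = 1 ∧ ∀ t ∈ Γ \ {t₀}, φ t = 0 := by
  have ht₀ : t₀ ∈ U ∩ Γ := by rw [hUiso]; rfl
  have hs : IsStrongBoundaryPoint A t₀ := by
    obtain ⟨t, htU, htΓ, ht⟩ := mem_closure_iff.1 (hΓdense ht₀.2) U hUopen ht₀.1
    have h1 : t ∈ U ∩ Γ := ⟨htU, htΓ⟩
    rw [hUiso] at h1
    have h2 : t = t₀ := h1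
    rwa [← h2]
  obtain ⟨f, hfA, hf1, hfn, c, hc, hfc⟩ := hs U hUopen ht₀.1
  set r : ℝ := max c 0 with hr
  have hr0 : 0 ≤ r := le_max_right _ _
  have hr1 : r < 1 := max_lt hc one_pos
  have hfr : ∀ t ∈ Γ, t ≠ t₀ → ‖f t‖ ≤ r := by
    intro t ht hne
    refine (hfc t fun htU => hne ?_).trans (le_max_left _ _)
    have h1 : t ∈ U ∩ Γ := ⟨htU, ht⟩
    rw [hUiso] at h1
    exact h1
  have hcau : CauchySeq (fun n : ℕ => f ^ n) := by
    refine cauchySeq_of_le_geometric r 2 hr1 fun n => ?_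
    rw [dist_eq_norm]
    obtain ⟨t, ht, hte⟩ := hΓbd _ (A.sub_mem (A.pow_mem hfA n) (A.pow_mem hfA (n + 1)))
    rw [← hte]
    by_cases h : t = t₀
    · subst h
      simp [hf1]
      positivity
    · have h1 := hfr t ht h
      have h2 : (f ^ n - f ^ (n + 1)) t = f t ^ n * (1 - f t) := by
        simp only [ContinuousMap.sub_apply, ContinuousMap.pow_apply]
        ring
      rw [h2, norm_mul, norm_pow, mul_comm]
      have h3 : ‖1 - f t‖ ≤ 2 := by
        refine (norm_sub_le _ _).trans ?_
        rw [norm_one]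
        linarith
      gcongr
  obtain ⟨φ, hφ⟩ := cauchySeq_tendsto_of_complete hcau
  have hφA : φ ∈ A :=
    hAclosed.mem_of_tendsto hφ (Filter.Eventually.of_forall fun n => A.pow_mem hfA n)
  have hpt : ∀ t, Filter.Tendsto (fun n : ℕ => f t ^ n) Filter.atTop (nhds (φ t)) := by
    intro t
    have := ((continuous_eval_const (F := C(K, ℂ)) t).tendsto φ).comp hφ
    simpa [Function.comp_def] using this
  have hφ1 : φ t₀ = 1 := by
    have := hpt t₀
    simp only [hf1, one_pow] at this
    exact tendsto_nhds_unique this tendsto_const_nhds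
  have hφ0 : ∀ t ∈ Γ \ {t₀}, φ t = 0 := fun t ht =>
    tendsto_nhds_unique (hpt t)
      (tendsto_pow_atTop_nhds_zero_of_norm_lt_one ((hfr t ht.1 ht.2).trans_lt hr1))
  refine ⟨φ, hφA, hφ1, le_antisymm ?_ ?_, hφ0⟩
  · obtain ⟨t, ht, hte⟩ := hΓbd φ hφA
    rw [← hte]
    by_cases h : t = t₀
    · rw [h, hφ1, norm_one]
    · rw [hφ0 t ⟨ht, h⟩, norm_zero]
      exact zero_le_one
  · have := φ.norm_coe_le_norm t₀
    rwa [hφ1, norm_one] at this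
end

section
/- Every infinite-dimensional uniform algebra A on a compact Hausdorff space K has the symmetric strong diameter two property: for every n ∈ ℕ, every finite family of slices S₁,…,Sₙ of the closed unit ball B_A and every ε > 0, there exist f_i ∈ S_i (i = 1,…,n) and g ∈ B_A such that f_i ± g ∈ S_i for every i ∈ {1,…,n} and ‖g‖_∞ > 1 − ε. -/
set_option maxHeartbeats 1000000
set_option synthInstance.maxHeartbeats 1000000

set_option linter.unusedSectionVars false
set_option linter.unusedVariables false

namespace UA
open Filter Topology

variable {K : Type*} [TopologicalSpace K] [CompactSpace K] [T2Space K]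

lemma mem_of_hasSum (A : Subalgebra ℂ C(K, ℂ)) (hA : IsClosed (A : Set C(K, ℂ)))
    (u : ℕ → C(K, ℂ)) (hu : ∀ n, u n ∈ A) (s : C(K, ℂ)) (h : HasSum u s) : s ∈ A :=
  hA.mem_of_tendsto h (Eventually.of_forall fun t => A.sum_mem fun n _ => hu n)

lemma exists_exp (A : Subalgebra ℂ C(K, ℂ)) (hA : IsClosed (A : Set C(K, ℂ)))
    (f : C(K, ℂ)) (hf : f ∈ A) : ∃ g ∈ A, ∀ x, g x = Complex.exp (f x) := by
  refine ⟨NormedSpace.exp f, ?_, fun x => ?_⟩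
  · refine mem_of_hasSum A hA _ (fun n => ?_) _ (NormedSpace.exp_series_hasSum_exp' (𝕂 := ℂ) f)
    exact A.smul_mem (A.pow_mem hf n) _
  · rw [Complex.exp_eq_exp_ℂ]
    let _ : NormedAlgebra ℚ C(K, ℂ) := NormedAlgebra.restrictScalars ℚ ℂ _
    exact NormedSpace.map_exp (ContinuousMap.evalAlgHom ℂ ℂ x) (by exact continuous_eval_const x) f

lemma exists_log (A : Subalgebra ℂ C(K, ℂ)) (hA : IsClosed (A : Set C(K, ℂ)))
    (q : C(K, ℂ)) (hq : q ∈ A) (hq1 : ‖q‖ < 1) :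
    ∃ g ∈ A, ∀ x, g x = Complex.log (1 - q x) := by
  have hs : Summable (fun n : ℕ => ((n : ℂ)⁻¹) • q ^ (n : ℕ)) := by
    refine Summable.of_norm_bounded_eventually_nat (g := fun n => ‖q‖ ^ n)
      (summable_geometric_of_lt_one (norm_nonneg _) hq1) ?_
    filter_upwards [eventually_ge_atTop 1] with n hn
    rw [norm_smul]
    have h1 : ‖((n : ℂ)⁻¹)‖ ≤ 1 := by
      rw [norm_inv, Complex.norm_natCast]
      exact inv_le_one_of_one_le₀ (by exact_mod_cast hn)
    calc _ ≤ 1 * ‖q‖ ^ n := by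
          gcongr
          exact norm_pow_le' q hn
      _ = _ := one_mul _
  obtain ⟨s, hs⟩ := hs
  refine ⟨-s, A.neg_mem (mem_of_hasSum A hA _ (fun n => A.smul_mem (A.pow_mem hq n) _) _ hs), fun x => ?_⟩
  have h1 := hs.mapL (ContinuousMap.evalCLM ℂ x)
  have h2 := Complex.hasSum_taylorSeries_neg_log (z := q x) ((q.norm_coe_le_norm x).trans_lt hq1)
  have h3 : s x = -Complex.log (1 - q x) := by
    refine h1.unique ?_
    convert h2 using 2 with n
    simp [div_eq_inv_mul]
  simp [h3]

lemma sector (η : ℝ) (hη : 0 < η) : ∃ α : ℝ, 0 < α ∧ ∀ w : ℂ, 0 < w.re → ‖w‖ ≤ 2 →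
    ‖1 - Complex.exp (α * Complex.log w)‖ + ‖Complex.exp (α * Complex.log w)‖ ≤ 1 + η := by
  have hc : Continuous (fun α : ℝ => 2 * Real.exp (α * Real.log 2) - 1 +
      Real.exp (α * Real.log 2) * (α * (Real.pi / 2))) := by fun_prop
  have := (hc.tendsto 0).eventually (gt_mem_nhds (show _ < 1 + η by norm_num; linarith))
  have h2 := (this.filter_mono (nhdsWithin_le_nhds (s := Set.Ioi 0))).and self_mem_nhdsWithin
  obtain ⟨α, hα, hα0⟩ := h2.exists
  replace hα0 : 0 < α := hα0
  refine ⟨α, hα0, fun w hw hw2 => ?_⟩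
  have hw0 : 0 < ‖w‖ := norm_pos_iff.2 (by rintro rfl; simp at hw)
  set r := Real.exp (α * Real.log ‖w‖) with hr
  set θ := α * w.arg with hθ
  have e : Complex.exp (α * Complex.log w) = r * Complex.exp (Complex.I * θ) := by
    rw [hr, hθ, Complex.ofReal_exp, ← Complex.exp_add, Complex.log]
    push_cast
    ring_nf
  have hn : ‖Complex.exp (α * Complex.log w)‖ = r := by
    rw [Complex.norm_exp, hr]; simp [Complex.log_re]
  have hr0 : 0 < r := Real.exp_pos _
  have hrR : r ≤ Real.exp (α * Real.log 2) := by
    rw [hr]; gcongr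
  have hθ1 : |θ| ≤ α * (Real.pi / 2) := by
    rw [hθ, abs_mul, abs_of_pos hα0]
    gcongr
    exact (Complex.abs_arg_lt_pi_div_two_iff.2 (Or.inl hw)).le
  have h1 : ‖1 - Complex.exp (α * Complex.log w)‖ ≤ |1 - r| + r * |θ| := by
    rw [e]
    have : (1 : ℂ) - r * Complex.exp (Complex.I * θ) = ((1 - r : ℝ) : ℂ) - r * (Complex.exp (Complex.I * θ) - 1) := by
      push_cast; ring
    rw [this]
    refine (norm_sub_le _ _).trans ?_
    rw [norm_mul, Complex.norm_real, Complex.norm_real, Real.norm_eq_abs, Real.norm_eq_abs, abs_of_pos hr0]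
    gcongr
    exact Real.norm_exp_I_mul_ofReal_sub_one_le
  have h3 : r * |θ| ≤ Real.exp (α * Real.log 2) * (α * (Real.pi / 2)) := by gcongr
  have h4 : 1 ≤ Real.exp (α * Real.log 2) := Real.one_le_exp (by positivity)
  rw [hn]
  rcases abs_cases (1 - r) with h | h <;> linarith

/-- Relative maxima push. -/
lemma push (p g : C(K, ℂ)) (hp : ∀ x, ‖p x‖ ≤ 1) (a : ℝ) (ha : 0 < a) (T : Set K) (hT : IsClosed T)
    (h : ∀ x ∈ T, ‖p x‖ = 1 → ‖g x‖ < a) :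
    ∀ᶠ m : ℕ in atTop, ∀ x ∈ T, ‖g x‖ * ‖p x‖ ^ m < a := by
  have hmono : ∀ m k : ℕ, m ≤ k → ∀ x, ‖g x‖ * ‖p x‖ ^ k ≤ ‖g x‖ * ‖p x‖ ^ m := by
    intro m k hmk x
    have := pow_le_pow_of_le_one (norm_nonneg (p x)) (hp x) hmk
    gcongr
  suffices hh : ∃ m : ℕ, ∀ x ∈ T, ‖g x‖ * ‖p x‖ ^ m < a by
    obtain ⟨m, hm⟩ := hh
    filter_upwards [eventually_ge_atTop m] with k hk x hx
    exact (hmono m k hk x).trans_lt (hm x hx)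
  by_contra! hcon
  let t : ℕ → Set K := fun m => T ∩ {x | a ≤ ‖g x‖ * ‖p x‖ ^ m}
  have hcl : ∀ m, IsClosed (t m) := fun m => hT.inter (isClosed_le (by fun_prop) (by fun_prop))
  obtain ⟨x, hx⟩ := IsCompact.nonempty_iInter_of_sequence_nonempty_isCompact_isClosed t
    (fun m x hx => ⟨hx.1, le_trans hx.2 (hmono m (m+1) (Nat.le_succ m) x)⟩)
    (fun m => by obtain ⟨x, hx, hx'⟩ := hcon m; exact ⟨x, hx, hx'⟩) (hcl 0).isCompact hcl
  rw [Set.mem_iInter] at hx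
  rcases (hp x).lt_or_eq with h1 | h1
  · have := (tendsto_pow_atTop_nhds_zero_of_lt_one (norm_nonneg _) h1).const_mul ‖g x‖
    rw [mul_zero] at this
    obtain ⟨m, hm⟩ := (this.eventually (gt_mem_nhds ha)).exists
    exact absurd (hx m).2 (not_le.2 hm)
  · have h2 := (hx 0).2
    have := h x (hx 0).1 h1
    simp at h2
    linarith

lemma normalize (A : Subalgebra ℂ C(K, ℂ)) (f : C(K, ℂ)) (hf : f ∈ A) (x0 : K) (h0 : f x0 ≠ 0) :
    ∃ G ∈ A, (∀ x, ‖G x‖ ≤ 1) ∧ (∃ x, ‖G x‖ = 1) ∧ ∀ x, ‖G x‖ = 1 → ∀ y, ‖f y‖ ≤ ‖f x‖ := by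
  obtain ⟨z, -, hz⟩ := isCompact_univ.exists_isMaxOn (s := (Set.univ : Set K)) ⟨x0, trivial⟩
    (f := fun x => ‖f x‖) (by fun_prop)
  have hz' : ∀ y, ‖f y‖ ≤ ‖f z‖ := fun y => hz (Set.mem_univ y)
  have hpos : 0 < ‖f z‖ := (norm_pos_iff.2 h0).trans_le (hz' x0)
  have hG : ∀ x, ‖((f z)⁻¹ • f) x‖ = ‖f x‖ / ‖f z‖ := by
    intro x
    simp [div_eq_inv_mul]
  refine ⟨(f z)⁻¹ • f, A.smul_mem hf _, fun x => ?_, ⟨z, ?_⟩, fun x hx y => ?_⟩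
  · rw [hG, div_le_one hpos]; exact hz' x
  · rw [hG, div_self hpos.ne']
  · rw [hG, div_eq_one_iff_eq hpos.ne'] at hx
    rw [hx]; exact hz' y

def Disj (p q : C(K, ℂ)) : Prop := ∀ x, ‖p x‖ = 1 → ‖q x‖ = 1 → False

lemma Disj.symm {p q : C(K, ℂ)} (h : Disj p q) : Disj q p := fun x h1 h2 => h x h2 h1

def Good (A : Subalgebra ℂ C(K, ℂ)) (N : ℕ) : Prop :=
  ∃ p : Fin N → C(K, ℂ), (∀ k, p k ∈ A) ∧ (∀ k x, ‖p k x‖ ≤ 1) ∧ (∀ k, ∃ x, ‖p k x‖ = 1) ∧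
    ∀ k l, k ≠ l → Disj (p k) (p l)

lemma good_cons (A : Subalgebra ℂ C(K, ℂ)) {N : ℕ} (p : Fin N → C(K, ℂ)) (h1 : ∀ k, p k ∈ A)
    (h2 : ∀ k x, ‖p k x‖ ≤ 1) (h3 : ∀ k, ∃ x, ‖p k x‖ = 1)
    (h4 : ∀ k l, k ≠ l → Disj (p k) (p l)) (G : C(K, ℂ)) (g1 : G ∈ A) (g2 : ∀ x, ‖G x‖ ≤ 1)
    (g3 : ∃ x, ‖G x‖ = 1) (g4 : ∀ k, Disj G (p k)) : Good A (N + 1) := by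
  refine ⟨Fin.cons G p, fun k => ?_, fun k => ?_, fun k => ?_, fun k l => ?_⟩
  · refine Fin.cases ?_ (fun k => ?_) k <;> simp [*]
  · refine Fin.cases ?_ (fun k => ?_) k <;> simp [*]
  · refine Fin.cases ?_ (fun k => ?_) k <;> simp [*]
  · refine Fin.cases ?_ (fun k => ?_) k <;> refine Fin.cases ?_ (fun l => ?_) l
    · simp
    · intro _; simpa using g4 l
    · intro _; simpa using (g4 k).symm
    · intro h; simpa using h4 k l (fun e => h (by rw [e]))

lemma good_succ (A : Subalgebra ℂ C(K, ℂ)) (hA : IsClosed (A : Set C(K, ℂ)))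
    (hAinf : ¬ FiniteDimensional ℂ A) {N : ℕ} (hN : Good A N) : Good A (N + 1) := by
  obtain ⟨p, h1, h2, h3, h4⟩ := hN
  choose xx hxx using h3
  let ev : A →ₗ[ℂ] (Fin N → ℂ) :=
    { toFun := fun f k => (f : C(K, ℂ)) (xx k)
      map_add' := fun f g => by ext k; simp
      map_smul' := fun c f => by ext k; simp }
  have hker : ∃ f : A, f ≠ 0 ∧ ∀ k, (f : C(K, ℂ)) (xx k) = 0 := by
    by_contra! hcon
    apply hAinf
    refine FiniteDimensional.of_injective ev ?_
    rw [← LinearMap.ker_eq_bot, LinearMap.ker_eq_bot']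
    intro f hf
    by_contra hne
    obtain ⟨k, hk⟩ := hcon f hne
    exact hk (congrFun hf k)
  obtain ⟨⟨f, hfA⟩, hf0, hfx⟩ := hker
  simp only at hfx
  have hne : ∃ x0, f x0 ≠ 0 := by
    by_contra! hcon
    exact hf0 (Subtype.ext (ContinuousMap.ext hcon))
  obtain ⟨x0, hx0⟩ := hne
  by_cases hcase : ∃ k y, ‖p k y‖ = 1 ∧ f y ≠ 0
  · obtain ⟨k, y, hy, hfy⟩ := hcase
    obtain ⟨F, hF⟩ : ∃ F : C(K, ℂ), F = (f y)⁻¹ • f := ⟨_, rfl⟩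
    have hFA : F ∈ A := hF ▸ A.smul_mem hfA _
    have hFy : F y = 1 := by simp [hF, hfy]
    have hFx : F (xx k) = 0 := by simp [hF, hfx k]
    obtain ⟨g1, hg1A, hg1⟩ := exists_exp A hA F hFA
    obtain ⟨g2, hg2A, hg2⟩ := exists_exp A hA (-F) (A.neg_mem hFA)
    have hg1n : ∀ x, ‖g1 x‖ = Real.exp (F x).re := fun x => by rw [hg1, Complex.norm_exp]
    have hg2n : ∀ x, ‖g2 x‖ = Real.exp (-(F x).re) := fun x => by rw [hg2, Complex.norm_exp]; simp
    have hPc : IsCompact {x | ‖p k x‖ = 1} := (isClosed_eq (by fun_prop) (by fun_prop)).isCompact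
    obtain ⟨y1, hy1, hm1⟩ := hPc.exists_isMaxOn ⟨y, hy⟩ (f := fun x => (F x).re)
      (Complex.continuous_re.comp F.continuous).continuousOn
    obtain ⟨y2, hy2, hm2⟩ := hPc.exists_isMinOn ⟨y, hy⟩ (f := fun x => (F x).re)
      (Complex.continuous_re.comp F.continuous).continuousOn
    have hb1 : 1 ≤ (F y1).re := by
      have : (F y).re ≤ (F y1).re := hm1 hy
      simpa [hFy] using this
    have hb2 : (F y2).re ≤ 0 := by
      have : (F y2).re ≤ (F (xx k)).re := hm2 (hxx k)
      simpa [hFx] using this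
    simp only [Set.mem_ofPred_eq] at hy1 hy2
    have e1 := push (p k) g1 (h2 k) (Real.exp (F y1).re) (Real.exp_pos _)
      {x | Real.exp (-(F y2).re) ≤ ‖g2 x‖} (isClosed_le (by fun_prop) (by fun_prop)) (by
        intro x hx _
        simp only [Set.mem_ofPred_eq, hg2n, Real.exp_le_exp] at hx
        rw [hg1n, Real.exp_lt_exp]; linarith)
    have e2 : ∀ᶠ m : ℕ in atTop, ∀ j, j ≠ k → ∀ x ∈ {x | ‖p j x‖ = 1},
        ‖g1 x‖ * ‖p k x‖ ^ m < Real.exp (F y1).re := by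
      rw [eventually_all]; intro j
      by_cases hj : j = k
      · exact Eventually.of_forall fun m h => absurd hj h
      · filter_upwards [push (p k) g1 (h2 k) (Real.exp (F y1).re) (Real.exp_pos _)
          {x | ‖p j x‖ = 1} (isClosed_eq (by fun_prop) (by fun_prop))
          (fun x hx hx' => (h4 j k hj x hx hx').elim)] with m hm _ using hm
    have e3 : ∀ᶠ m : ℕ in atTop, ∀ j, j ≠ k → ∀ x ∈ {x | ‖p j x‖ = 1},
        ‖g2 x‖ * ‖p k x‖ ^ m < Real.exp (-(F y2).re) := by
      rw [eventually_all]; intro j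
      by_cases hj : j = k
      · exact Eventually.of_forall fun m h => absurd hj h
      · filter_upwards [push (p k) g2 (h2 k) (Real.exp (-(F y2).re)) (Real.exp_pos _)
          {x | ‖p j x‖ = 1} (isClosed_eq (by fun_prop) (by fun_prop))
          (fun x hx hx' => (h4 j k hj x hx hx').elim)] with m hm _ using hm
    obtain ⟨m, hm1, hm2, hm3⟩ := (e1.and (e2.and e3)).exists
    have hpk : ∀ z, ‖p k z‖ = 1 → p k z ≠ 0 := fun z hz h => by simp [h] at hz
    obtain ⟨G1, a1, a2, a3, a4⟩ := normalize A (g1 * p k ^ m) (A.mul_mem hg1A (A.pow_mem (h1 k) m)) y1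
      (by simpa [hg1] using fun h => absurd h (hpk y1 hy1))
    obtain ⟨G2, b1, b2, b3, b4⟩ := normalize A (g2 * p k ^ m) (A.mul_mem hg2A (A.pow_mem (h1 k) m)) y2
      (by simpa [hg2] using fun h => absurd h (hpk y2 hy2))
    have a5 : ∀ x, ‖G1 x‖ = 1 → Real.exp (F y1).re ≤ ‖g1 x‖ * ‖p k x‖ ^ m := fun x hx => by
      simpa [hy1, hg1n] using a4 x hx y1
    have b5 : ∀ x, ‖G2 x‖ = 1 → Real.exp (-(F y2).re) ≤ ‖g2 x‖ * ‖p k x‖ ^ m := fun x hx => by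
      simpa [hy2, hg2n] using b4 x hx y2
    have d12 : Disj G2 G1 := by
      intro x hx2 hx1
      have := b5 x hx2
      refine absurd (a5 x hx1) (not_le.2 (hm1 x (this.trans ?_)))
      exact mul_le_of_le_one_right (norm_nonneg _) (pow_le_one₀ (norm_nonneg _) (h2 k x))
    have d1 : ∀ j, j ≠ k → Disj G1 (p j) := fun j hj x hx hx' =>
      absurd (a5 x hx) (not_le.2 (hm2 j hj x hx'))
    have d2 : ∀ j, j ≠ k → Disj G2 (p j) := fun j hj x hx hx' =>
      absurd (b5 x hx) (not_le.2 (hm3 j hj x hx'))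
    refine good_cons A (Function.update p k G1) (fun j => ?_) (fun j => ?_) (fun j => ?_)
      (fun j l hjl => ?_) G2 b1 b2 b3 (fun j => ?_)
    · by_cases hj : j = k
      · subst hj; simpa using a1
      · simpa [hj] using h1 j
    · by_cases hj : j = k
      · subst hj; simpa using a2
      · simpa [hj] using h2 j
    · by_cases hj : j = k
      · subst hj; simpa using a3
      · simpa [hj] using ⟨xx j, hxx j⟩
    · by_cases hj : j = k
      · subst hj
        simpa [hjl.symm] using d1 l hjl.symm
      · by_cases hl : l = k
        · subst hl
          simpa [hj] using (d1 j hj).symm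
        · simpa [hj, hl] using h4 j l hjl
    · by_cases hj : j = k
      · subst hj; simpa using d12
      · simpa [hj] using d2 j hj
  · push Not at hcase
    obtain ⟨G, a1, a2, a3, a4⟩ := normalize A f hfA x0 hx0
    refine good_cons A p h1 h2 (fun k => ⟨_, hxx k⟩) h4 G a1 a2 a3 (fun k x hx hx' => ?_)
    have := a4 x hx x0
    rw [hcase k x hx'] at this
    simp [hx0] at this

lemma good_all (A : Subalgebra ℂ C(K, ℂ)) (hA : IsClosed (A : Set C(K, ℂ)))
    (hAinf : ¬ FiniteDimensional ℂ A) (N : ℕ) : Good A N := by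
  induction N with
  | zero => exact ⟨fun k => k.elim0, fun k => k.elim0, fun k => k.elim0, fun k => k.elim0, fun k => k.elim0⟩
  | succ n ih => exact good_succ A hA hAinf ih

lemma sum_functional (A : Subalgebra ℂ C(K, ℂ)) {N : ℕ} (h : Fin N → A) (C : ℝ) (hC : 0 ≤ C)
    (hs : ∀ x, ∑ k, ‖(h k : C(K, ℂ)) x‖ ≤ C) (φ : A →L[ℂ] ℂ) : ∑ k, ‖φ (h k)‖ ≤ ‖φ‖ * C := by
  have hu : ∀ z : ℂ, ∃ c : ℂ, ‖c‖ ≤ 1 ∧ c * z = ‖z‖ := by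
    intro z
    by_cases hz : z = 0
    · exact ⟨0, by simp, by simp [hz]⟩
    · refine ⟨‖z‖ / z, by simp [hz], by field_simp⟩
  choose c hc1 hc2 using fun k => hu (φ (h k))
  have e : φ (∑ k, c k • h k) = ((∑ k, ‖φ (h k)‖ : ℝ) : ℂ) := by
    simp [map_sum, hc2]
  have hn : ‖∑ k, c k • h k‖ ≤ C := by
    change ‖((∑ k, c k • h k : A) : C(K, ℂ))‖ ≤ C
    rw [ContinuousMap.norm_le _ hC]
    intro x
    refine le_trans ?_ (hs x)
    have : ((∑ k, c k • h k : A) : C(K, ℂ)) x = ∑ k, c k * (h k : C(K, ℂ)) x := by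
      simp
    rw [this]
    refine (norm_sum_le _ _).trans (Finset.sum_le_sum fun k _ => ?_)
    rw [norm_mul]
    exact mul_le_of_le_one_left (norm_nonneg _) (hc1 k)
  have h0 : 0 ≤ ∑ k, ‖φ (h k)‖ := Finset.sum_nonneg fun k _ => norm_nonneg _
  calc ∑ k, ‖φ (h k)‖ = ‖φ (∑ k, c k • h k)‖ := by
        rw [e, Complex.norm_real, Real.norm_eq_abs, abs_of_nonneg h0]
    _ ≤ ‖φ‖ * ‖∑ k, c k • h k‖ := φ.le_opNorm _
    _ ≤ _ := by gcongr

lemma sep_const {N : ℕ} (p : Fin N → C(K, ℂ)) (h2 : ∀ k x, ‖p k x‖ ≤ 1)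
    (h4 : ∀ k l, k ≠ l → Disj (p k) (p l)) :
    ∃ c : ℝ, 0 < c ∧ c < 1 ∧ ∀ k l, k ≠ l → ∀ x, ‖p k x‖ < c ∨ ‖p l x‖ < c := by
  have key : ∀ᶠ c : ℝ in 𝓝[<] 1, ∀ k l, k ≠ l → ∀ x, ‖p k x‖ < c ∨ ‖p l x‖ < c := by
    rw [eventually_all]; intro k
    rw [eventually_all]; intro l
    by_cases hkl : k = l
    · exact Eventually.of_forall fun _ h => absurd hkl h
    rcases isEmpty_or_nonempty K with hK | ⟨⟨x0⟩⟩
    · exact Eventually.of_forall fun _ _ x => hK.elim x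
    obtain ⟨z, -, hz⟩ := isCompact_univ.exists_isMaxOn (s := (Set.univ : Set K)) ⟨x0, trivial⟩
      (f := fun x => min ‖p k x‖ ‖p l x‖) (by fun_prop)
    have hz1 : min ‖p k z‖ ‖p l z‖ < 1 := by
      rw [min_lt_iff]
      by_contra! hcon
      exact h4 k l hkl z (le_antisymm (h2 k z) hcon.1) (le_antisymm (h2 l z) hcon.2)
    filter_upwards [nhdsWithin_le_nhds (lt_mem_nhds hz1)] with c hc _ x
    rw [← min_lt_iff]
    exact lt_of_le_of_lt (hz (Set.mem_univ x)) hc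
  have h0 : ∀ᶠ c : ℝ in 𝓝[<] 1, 0 < c := nhdsWithin_le_nhds (lt_mem_nhds one_pos)
  have h1 : ∀ᶠ c : ℝ in 𝓝[<] 1, c < 1 := self_mem_nhdsWithin
  obtain ⟨c, a, b, d⟩ := (h0.and (h1.and key)).exists
  exact ⟨c, a, b, d⟩

lemma key (A : Subalgebra ℂ C(K, ℂ)) (hA : IsClosed (A : Set C(K, ℂ)))
    (hAinf : ¬ FiniteDimensional ℂ A) {J : Type*} [Fintype J] (φ : J → (A →L[ℂ] ℂ))
    (η : ℝ) (hη : 0 < η) (hη1 : η ≤ 1) :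
    ∃ h : A, (∀ x, ‖1 - (h : C(K, ℂ)) x‖ + ‖(h : C(K, ℂ)) x‖ ≤ 1 + η) ∧
      (∃ x, 1 - η ≤ ‖(h : C(K, ℂ)) x‖) ∧ ∀ j, ‖φ j h‖ < η := by
  obtain ⟨N, hN⟩ := exists_nat_gt ((∑ j, ‖φ j‖) * 3 / η)
  have hM0 : 0 ≤ ∑ j, ‖φ j‖ := Finset.sum_nonneg fun j _ => (φ j).opNorm_nonneg
  have hN0 : (0 : ℝ) < N := lt_of_le_of_lt (by positivity) hN
  rw [div_lt_iff₀ hη] at hN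
  obtain ⟨p, h1, h2, h3, h4⟩ := good_all A hA hAinf N
  choose xx hxx using h3
  obtain ⟨c, hc0, hc1, hc⟩ := sep_const p h2 h4
  obtain ⟨α, hα, hsec⟩ := sector η hη
  have hcont : ContinuousAt (fun w : ℂ => 1 - Complex.exp (α * Complex.log (1 - w))) 0 := by
    have : ContinuousAt (fun w : ℂ => Complex.log (1 - w)) 0 :=
      ContinuousAt.clog (by fun_prop) (by simp)
    fun_prop
  obtain ⟨s, hs0, hs⟩ := Metric.continuousAt_iff.1 hcont (1 / N) (by positivity)
  have hs' : ∀ w : ℂ, ‖w‖ < s → ‖1 - Complex.exp (α * Complex.log (1 - w))‖ ≤ 1 / N := by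
    intro w hw
    have := hs (x := w) (by simpa using hw)
    simpa using this.le
  obtain ⟨m, hm⟩ := exists_pow_lt_of_lt_one hs0 hc1
  obtain ⟨B, hB0, hB⟩ : ∃ B : ℝ, 0 < B ∧ Real.exp (-(α * B)) ≤ η := by
    refine ⟨|Real.log η| / α + 1, by positivity, ?_⟩
    rw [← Real.le_log_iff_exp_le hη, mul_add, mul_div_cancel₀ _ hα.ne']
    have := neg_abs_le (Real.log η)
    linarith
  obtain ⟨ρ, hρ⟩ : ∃ ρ : ℝ, ρ = 1 - Real.exp (-B) := ⟨_, rfl⟩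
  have hρ1 : ρ < 1 := by have := Real.exp_pos (-B); linarith
  have hρ0 : 0 < ρ := by
    have : Real.exp (-B) < 1 := by rw [← Real.exp_zero, Real.exp_lt_exp]; linarith
    linarith
  have hE : ∀ k, ∃ h : A, (∃ x, 1 - η ≤ ‖(h : C(K, ℂ)) x‖) ∧
      (∀ x, ‖1 - (h : C(K, ℂ)) x‖ + ‖(h : C(K, ℂ)) x‖ ≤ 1 + η) ∧
      ∀ x, ‖p k x‖ < c → ‖(h : C(K, ℂ)) x‖ ≤ 1 / N := by
    intro k
    obtain ⟨q, hq⟩ : ∃ q : C(K, ℂ), q = ((ρ : ℂ) * (p k (xx k) ^ m)⁻¹) • p k ^ m := ⟨_, rfl⟩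
    have hqA : q ∈ A := hq ▸ A.smul_mem (A.pow_mem (h1 k) m) _
    have hqn : ∀ x, ‖q x‖ = ρ * ‖p k x‖ ^ m := by
      intro x
      simp [hq, hxx k, abs_of_pos hρ0]
    have hqρ : ∀ x, ‖q x‖ ≤ ρ := fun x => by
      rw [hqn]
      exact mul_le_of_le_one_right hρ0.le (pow_le_one₀ (norm_nonneg _) (h2 k x))
    have hq1 : ‖q‖ < 1 := lt_of_le_of_lt ((ContinuousMap.norm_le _ hρ0.le).2 hqρ) hρ1
    have hqx : q (xx k) = ρ := by
      have : p k (xx k) ≠ 0 := fun h => by have := hxx k; simp [h] at this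
      simp [hq, this]
    obtain ⟨L, hLA, hL⟩ := exists_log A hA q hqA hq1
    obtain ⟨E, hEA, hE⟩ := exists_exp A hA ((α : ℂ) • L) (A.smul_mem hLA _)
    have hEx : ∀ x, E x = Complex.exp (α * Complex.log (1 - q x)) := fun x => by
      rw [hE]; simp [hL]
    refine ⟨⟨1 - E, A.sub_mem A.one_mem hEA⟩, ⟨xx k, ?_⟩, fun x => ?_, fun x hx => ?_⟩
    · simp only [ContinuousMap.sub_apply, ContinuousMap.one_apply]
      have : ‖E (xx k)‖ ≤ η := by
        have hr : (1 : ℂ) - ρ = ((Real.exp (-B) : ℝ) : ℂ) := by rw [hρ]; push_cast; ring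
        rw [hEx, hqx, hr, ← Complex.ofReal_log (Real.exp_pos _).le, Real.log_exp, Complex.norm_exp]
        refine le_trans (le_of_eq ?_) hB
        simp
      have h5 := norm_sub_norm_le (1 : ℂ) (E (xx k))
      rw [norm_one] at h5
      linarith
    · simp only [ContinuousMap.sub_apply, ContinuousMap.one_apply]
      have hre : 0 < (1 - q x).re := by
        have := (Complex.re_le_norm (q x)).trans (hqρ x)
        simp; linarith
      have hn2 : ‖1 - q x‖ ≤ 2 := by
        refine (norm_sub_le _ _).trans ?_
        have := hqρ x
        rw [norm_one]; linarith
      have := hsec _ hre hn2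
      rw [← hEx] at this
      rw [sub_sub_cancel, add_comm]; exact this
    · simp only [ContinuousMap.sub_apply, ContinuousMap.one_apply]
      rw [hEx]
      apply hs'
      rw [hqn]
      refine lt_of_le_of_lt ?_ hm
      have : ‖p k x‖ ^ m ≤ c ^ m := by gcongr
      calc _ ≤ 1 * ‖p k x‖ ^ m := by gcongr
        _ ≤ _ := by linarith
  choose h ha hb hd using hE
  have hsum : ∀ x, ∑ k, ‖(h k : C(K, ℂ)) x‖ ≤ 3 := by
    intro x
    have hN1 : ∑ k : Fin N, (1 / (N : ℝ)) = 1 := by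
      simp; field_simp
    by_cases hex : ∃ k0, c ≤ ‖p k0 x‖
    · obtain ⟨k0, hk0⟩ := hex
      have : ∀ k, ‖(h k : C(K, ℂ)) x‖ ≤ 1 / N + (if k = k0 then 2 else 0) := by
        intro k
        by_cases hk : k = k0
        · have := hb k x
          have h5 := norm_nonneg (1 - (h k : C(K, ℂ)) x)
          have h6 : (0 : ℝ) ≤ 1 / N := by positivity
          rw [if_pos hk]
          linarith
        · rw [if_neg hk, add_zero]
          exact hd k x ((hc k k0 hk x).resolve_right (not_lt.2 hk0))
      refine (Finset.sum_le_sum fun k _ => this k).trans ?_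
      rw [Finset.sum_add_distrib, hN1]
      simp; norm_num
    · push Not at hex
      refine (Finset.sum_le_sum fun k _ => hd k x (hex k)).trans ?_
      rw [hN1]; norm_num
  have hk : ∃ k, ∑ j, ‖φ j (h k)‖ < η := by
    by_contra! hcon
    have h5 : ∑ k : Fin N, η ≤ ∑ k, ∑ j, ‖φ j (h k)‖ := Finset.sum_le_sum fun k _ => hcon k
    rw [Finset.sum_comm] at h5
    have h6 := h5.trans (Finset.sum_le_sum fun j _ => sum_functional A h 3 (by norm_num) hsum (φ j))
    rw [← Finset.sum_mul] at h6
    simp at h6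
    linarith
  obtain ⟨k, hk⟩ := hk
  refine ⟨h k, hb k, ha k, fun j => lt_of_le_of_lt ?_ hk⟩
  exact Finset.single_le_sum (f := fun j => ‖φ j (h k)‖) (fun j _ => norm_nonneg _) (Finset.mem_univ j)

lemma exists_near (A : Subalgebra ℂ C(K, ℂ)) (ψ : A →L[ℂ] ℂ) (hψ : ‖ψ‖ = 1) (η : ℝ) (hη : 0 < η) :
    ∃ f : A, ‖f‖ ≤ 1 ∧ 1 - η < (ψ f).re := by
  obtain ⟨x, hx, hx'⟩ := ψ.exists_lt_apply_of_lt_opNorm (r := 1 - η) (by rw [hψ]; linarith)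
  by_cases hz : ψ x = 0
  · exact ⟨x, hx.le, by rw [hz] at hx' ⊢; simpa using hx'⟩
  · refine ⟨((‖ψ x‖ : ℂ) / ψ x) • x, ?_, ?_⟩
    · have h1 : ‖(‖ψ x‖ : ℂ) / ψ x‖ = 1 := by
        rw [norm_div, Complex.norm_real, norm_norm, div_self (norm_ne_zero_iff.2 hz)]
      have h2 := norm_smul_le ((‖ψ x‖ : ℂ) / ψ x) x
      rw [h1, one_mul] at h2
      exact h2.trans hx.le
    · rw [map_smul, smul_eq_mul, div_mul_cancel₀ _ hz, Complex.ofReal_re]; exact hx'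

end UA

/- STATEMENT 4: Every infinite-dimensional uniform algebra `A` on a compact Hausdorff
space `K` has the symmetric strong diameter two property: for any finitely many slices
`Sᵢ = {f ∈ B_A : Re ψᵢ(f) > 1 - δᵢ}` of the closed unit ball of `A` and any `ε > 0`,
there are `fᵢ ∈ Sᵢ` and `g ∈ B_A` with `fᵢ ± g ∈ Sᵢ` for all `i` and `‖g‖ > 1 - ε`. -/
theorem stmt_4 {K : Type*} [TopologicalSpace K] [CompactSpace K] [T2Space K]
    (A : Subalgebra ℂ C(K, ℂ)) (hAclosed : IsClosed (A : Set C(K, ℂ)))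
    (hAsep : ∀ s t : K, s ≠ t → ∃ f ∈ A, f s ≠ f t)
    (hAinf : ¬ FiniteDimensional ℂ A) :
    ∀ (n : ℕ) (ψ : Fin n → (A →L[ℂ] ℂ)) (δ : Fin n → ℝ),
      (∀ i, ‖ψ i‖ = 1) → (∀ i, 0 < δ i) → ∀ ε > (0 : ℝ),
      ∃ (f : Fin n → A) (g : A), ‖g‖ ≤ 1 ∧ 1 - ε < ‖g‖ ∧
        ∀ i : Fin n,
          (‖f i‖ ≤ 1 ∧ 1 - δ i < (ψ i (f i)).re) ∧
          (‖f i + g‖ ≤ 1 ∧ 1 - δ i < (ψ i (f i + g)).re) ∧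
          (‖f i - g‖ ≤ 1 ∧ 1 - δ i < (ψ i (f i - g)).re) := by
  intro n ψ δ hψ hδ ε hε
  obtain ⟨η, hη, hη1, hηε, hηδ⟩ : ∃ η : ℝ, 0 < η ∧ η ≤ 1 ∧ 4 * η ≤ ε ∧ ∀ i, 4 * η ≤ δ i := by
    have key : ∀ᶠ η : ℝ in nhdsWithin 0 (Set.Ioi 0), ∀ i, 4 * η < δ i := by
      rw [Filter.eventually_all]; intro i
      have : 0 < δ i / 4 := by have := hδ i; positivity
      filter_upwards [nhdsWithin_le_nhds (gt_mem_nhds this)] with a ha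
      linarith
    have h1 : ∀ᶠ η : ℝ in nhdsWithin 0 (Set.Ioi 0), η < min 1 (ε / 4) :=
      nhdsWithin_le_nhds (gt_mem_nhds (by positivity))
    have h0 : ∀ᶠ η : ℝ in nhdsWithin 0 (Set.Ioi 0), 0 < η := self_mem_nhdsWithin
    obtain ⟨η, a, b, d⟩ := (h0.and (h1.and key)).exists
    rw [lt_min_iff] at b
    exact ⟨η, a, b.1.le, by linarith [b.2], fun i => (d i).le⟩
  choose f hf1 hf2 using fun i => UA.exists_near A (ψ i) (hψ i) η hη
  let mulR : Fin n → (A →L[ℂ] A) := fun i => (ContinuousLinearMap.mul ℂ A) (f i)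
  let φ : Fin n ⊕ Fin n → (A →L[ℂ] ℂ) := Sum.elim ψ (fun i => (ψ i).comp (mulR i))
  obtain ⟨h, hb, ⟨x0, hx0⟩, hφ⟩ := UA.key A hAclosed hAinf φ η hη hη1
  have hφ1 : ∀ i, ‖ψ i h‖ < η := fun i => hφ (Sum.inl i)
  have hφ2 : ∀ i, ‖ψ i (f i * h)‖ < η := fun i => hφ (Sum.inr i)
  obtain ⟨t, ht⟩ : ∃ t : ℝ, t = (1 + η)⁻¹ := ⟨_, rfl⟩
  have ht0 : 0 < t := by rw [ht]; positivity
  have ht1 : t * (1 + η) = 1 := by rw [ht]; field_simp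
  have hfx : ∀ i x, ‖(f i : C(K, ℂ)) x‖ ≤ 1 := fun i x =>
    ((f i : C(K, ℂ)).norm_coe_le_norm x).trans (hf1 i)
  have hnle : ∀ (a : A), (∀ x, ‖(a : C(K, ℂ)) x‖ ≤ 1) → ‖a‖ ≤ 1 := fun a ha => by
    change ‖(a : C(K, ℂ))‖ ≤ 1
    exact (ContinuousMap.norm_le _ zero_le_one).2 ha
  have hfac : ∀ i, ∀ s : ℂ, ‖s‖ ≤ 1 → ∀ x, ‖(t : ℂ) * ((f i : C(K, ℂ)) x - (f i : C(K, ℂ)) x * (h : C(K, ℂ)) x) +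
      s * ((t : ℂ) * (h : C(K, ℂ)) x)‖ ≤ 1 := by
    intro i s hs x
    have e : (t : ℂ) * ((f i : C(K, ℂ)) x - (f i : C(K, ℂ)) x * (h : C(K, ℂ)) x) +
      s * ((t : ℂ) * (h : C(K, ℂ)) x) =
      t * ((f i : C(K, ℂ)) x * (1 - (h : C(K, ℂ)) x) + s * (h : C(K, ℂ)) x) := by ring
    rw [e, norm_mul, Complex.norm_real, Real.norm_eq_abs, abs_of_pos ht0, ← ht1]
    refine mul_le_mul_of_nonneg_left ?_ ht0.le
    refine ((norm_add_le _ _).trans ?_).trans (hb x)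
    rw [norm_mul, norm_mul]
    exact add_le_add (mul_le_of_le_one_left (norm_nonneg _) (hfx i x))
      (mul_le_of_le_one_left (norm_nonneg _) hs)
  have hre : ∀ i, ∀ s : ℝ, |s| ≤ 1 → 1 - δ i <
      t * ((ψ i (f i)).re - (ψ i (f i * h)).re) + s * (t * (ψ i h).re) := by
    intro i s hs
    have h1 := (abs_le.1 ((Complex.abs_re_le_norm _).trans (hφ2 i).le)).2
    have h2 : |s * (ψ i h).re| ≤ η := by
      rw [abs_mul]
      calc _ ≤ 1 * |(ψ i h).re| := by gcongr
        _ ≤ η := by rw [one_mul]; exact (Complex.abs_re_le_norm _).trans (hφ1 i).le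
    have h3 := (abs_le.1 h2).1
    have h4 : t * (1 - 3 * η) < t * ((ψ i (f i)).re - (ψ i (f i * h)).re + s * (ψ i h).re) := by
      refine mul_lt_mul_of_pos_left ?_ ht0
      linarith [hf2 i]
    have h5 : t * ((1 - 4 * η) * (1 + η)) ≤ t * (1 - 3 * η) := by
      refine mul_le_mul_of_nonneg_left ?_ ht0.le
      nlinarith [sq_nonneg η]
    have h6 : t * ((1 - 4 * η) * (1 + η)) = 1 - 4 * η := by
      linear_combination (1 - 4 * η) * ht1
    have := hηδ i
    linarith
  have hψf : ∀ i, ψ i ((t : ℂ) • (f i - f i * h)) = t * (ψ i (f i) - ψ i (f i * h)) := fun i => by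
    rw [map_smul, map_sub, smul_eq_mul]
  have hψg : ∀ i, ψ i ((t : ℂ) • h) = t * ψ i h := fun i => by
    rw [map_smul, smul_eq_mul]
  refine ⟨fun i => (t : ℂ) • (f i - f i * h), (t : ℂ) • h, ?_, ?_, fun i => ⟨⟨?_, ?_⟩, ⟨?_, ?_⟩, ⟨?_, ?_⟩⟩⟩
  · refine hnle _ fun x => ?_
    change ‖(t : ℂ) * (h : C(K, ℂ)) x‖ ≤ 1
    rw [norm_mul, Complex.norm_real, Real.norm_eq_abs, abs_of_pos ht0, ← ht1]
    refine mul_le_mul_of_nonneg_left ?_ ht0.le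
    linarith [hb x, norm_nonneg (1 - (h : C(K, ℂ)) x)]
  · have h1 : ‖(t : ℂ) * (h : C(K, ℂ)) x0‖ ≤ ‖(t : ℂ) • h‖ :=
      (((t : ℂ) • h : A) : C(K, ℂ)).norm_coe_le_norm x0
    refine lt_of_lt_of_le ?_ h1
    rw [norm_mul, Complex.norm_real, Real.norm_eq_abs, abs_of_pos ht0]
    have h2 : t * (1 - η) ≤ t * ‖(h : C(K, ℂ)) x0‖ := mul_le_mul_of_nonneg_left hx0 ht0.le
    have h3 : t * ((1 - 2 * η) * (1 + η)) ≤ t * (1 - η) := by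
      refine mul_le_mul_of_nonneg_left ?_ ht0.le
      nlinarith [sq_nonneg η]
    have h6 : t * ((1 - 2 * η) * (1 + η)) = 1 - 2 * η := by
      linear_combination (1 - 2 * η) * ht1
    linarith
  · refine hnle _ fun x => ?_
    have := hfac i 0 (by simp) x
    rw [zero_mul, add_zero] at this
    exact this
  · have := hre i 0 (by simp)
    rw [zero_mul, add_zero] at this
    rw [hψf, Complex.re_ofReal_mul, Complex.sub_re]
    exact this
  · refine hnle _ fun x => ?_
    have := hfac i 1 (by simp) x
    rw [one_mul] at this
    exact this
  · have := hre i 1 (by simp)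
    rw [one_mul] at this
    rw [map_add, hψf, hψg, Complex.add_re, Complex.re_ofReal_mul, Complex.re_ofReal_mul, Complex.sub_re]
    exact this
  · refine hnle _ fun x => ?_
    have := hfac i (-1) (by simp) x
    rw [neg_one_mul, ← sub_eq_add_neg] at this
    exact this
  · have := hre i (-1) (by simp)
    rw [neg_one_mul, ← sub_eq_add_neg] at this
    rw [map_sub, hψf, hψg, Complex.sub_re, Complex.re_ofReal_mul, Complex.re_ofReal_mul, Complex.sub_re]
    exact this
end

section
/- Let X be a nontrivial complex Banach space (X ≠ {0}) and let C_b(B_X) denote the Banach algebra of all bounded continuous complex-valued functions on the closed unit ball B_X of X, with the supremum norm. Then C_b(B_X) has the symmetric strong diameter two property: for every n ∈ ℕ, every finite family of slices S₁,…,Sₙ of the closed unit ball of C_b(B_X) and every ε > 0, there exist f_i ∈ S_i (i = 1,…,n) and g in the closed unit ball of C_b(B_X) such that f_i ± g ∈ S_i for every i and ‖g‖_∞ > 1 − ε. -/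
open BoundedContinuousFunction

set_option maxHeartbeats 1000000
set_option synthInstance.maxHeartbeats 1000000

lemma exists_phase (z : ℂ) : ∃ c : ℂ, ‖c‖ ≤ 1 ∧ c * z = (‖z‖ : ℂ) := by
  by_cases hz : z = 0
  · exact ⟨0, by simp, by simp [hz]⟩
  · refine ⟨(‖z‖ : ℂ) / z, ?_, ?_⟩
    · have : ‖z‖ ≠ 0 := norm_ne_zero_iff.mpr hz
      simp [this]
    · field_simp

lemma sum_norm_le {K : Type*} [TopologicalSpace K] (φ : (K →ᵇ ℂ) →L[ℂ] ℂ) (hφ : ‖φ‖ = 1)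
    (u : ℕ → (K →ᵇ ℂ)) (s : Finset ℕ) (hu : ∀ x, ∑ k ∈ s, ‖u k x‖ ≤ 1) :
    ∑ k ∈ s, ‖φ (u k)‖ ≤ 1 := by
  choose c hc1 hc2 using fun k => exists_phase (φ (u k))
  have h1 : φ (∑ k ∈ s, c k • u k) = ((∑ k ∈ s, ‖φ (u k)‖ : ℝ) : ℂ) := by
    rw [map_sum]
    push_cast
    refine Finset.sum_congr rfl fun k _ => ?_
    rw [map_smul, smul_eq_mul, hc2]
  have h2 : ‖∑ k ∈ s, c k • u k‖ ≤ 1 := by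
    rw [BoundedContinuousFunction.norm_le zero_le_one]
    intro x
    have : (∑ k ∈ s, c k • u k) x = ∑ k ∈ s, c k * u k x := by
      simp
    rw [this]
    refine (norm_sum_le _ _).trans (le_trans (Finset.sum_le_sum fun k _ => ?_) (hu x))
    rw [norm_mul]
    exact mul_le_of_le_one_left (norm_nonneg _) (hc1 k)
  have h3 := φ.le_opNorm (∑ k ∈ s, c k • u k)
  rw [h1, hφ, one_mul, Complex.norm_real] at h3
  exact (le_abs_self _).trans (h3.trans h2)

lemma tendsto_zero {K : Type*} [TopologicalSpace K] (φ : (K →ᵇ ℂ) →L[ℂ] ℂ) (hφ : ‖φ‖ = 1)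
    (u : ℕ → (K →ᵇ ℂ)) (hu : ∀ s : Finset ℕ, ∀ x, ∑ k ∈ s, ‖u k x‖ ≤ 1) :
    Filter.Tendsto (fun k => ‖φ (u k)‖) Filter.atTop (nhds 0) :=
  (summable_of_sum_le (fun _ => norm_nonneg _)
    (fun s => sum_norm_le φ hφ u s (hu s))).tendsto_atTop_zero

noncomputable def tent (k : ℕ) (t : ℝ) : ℝ := max 0 (1 - 4 * |2 ^ k * t - 1|)

lemma tent_nonneg (k : ℕ) (t : ℝ) : 0 ≤ tent k t := le_max_left _ _
lemma tent_le_one (k : ℕ) (t : ℝ) : tent k t ≤ 1 :=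
  max_le zero_le_one (by linarith [abs_nonneg (2 ^ k * t - 1)])

lemma tent_lt {j k : ℕ} (h : j < k) {t : ℝ} (hj : tent j t ≠ 0) (hk : tent k t ≠ 0) : False := by
  have key : ∀ m, tent m t ≠ 0 → |2 ^ m * t - 1| < 1 / 4 := by
    intro m hm
    by_contra hcon
    exact hm (max_eq_left (by linarith))
  have a := abs_lt.1 (key j hj)
  have b := abs_lt.1 (key k hk)
  obtain ⟨d, rfl⟩ := Nat.exists_eq_add_of_lt h
  have h1 : (1 : ℝ) ≤ 2 ^ d := one_le_pow₀ (by norm_num)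
  have h2 : (2 : ℝ) ^ (j + d + 1) * t = 2 * (2 ^ d * (2 ^ j * t)) := by ring
  rw [h2] at b
  nlinarith

lemma tent_sum (s : Finset ℕ) (t : ℝ) : ∑ k ∈ s, tent k t ≤ 1 := by
  by_cases h : ∃ k ∈ s, tent k t ≠ 0
  · obtain ⟨k, hk, hk0⟩ := h
    rw [Finset.sum_eq_single k]
    · exact tent_le_one k t
    · intro j _ hj
      by_contra hj0
      rcases lt_or_gt_of_ne hj with h | h
      · exact tent_lt h hj0 hk0
      · exact tent_lt h hk0 hj0
    · exact fun h => absurd hk h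
  · push Not at h
    rw [Finset.sum_eq_zero h]
    exact zero_le_one

noncomputable def bump (X : Type*) [NormedAddCommGroup X] (k : ℕ) :
    ↥(Metric.closedBall (0 : X) 1) →ᵇ ℂ :=
  BoundedContinuousFunction.ofNormedAddCommGroup (fun x => ((tent k ‖(x : X)‖ : ℝ) : ℂ))
    (by unfold tent; fun_prop) 1
    (fun x => by
      rw [Complex.norm_real, Real.norm_of_nonneg (tent_nonneg _ _)]
      exact tent_le_one _ _)

lemma bump_apply (X : Type*) [NormedAddCommGroup X] (k : ℕ)
    (x : ↥(Metric.closedBall (0 : X) 1)) : bump X k x = ((tent k ‖(x : X)‖ : ℝ) : ℂ) := rfl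

lemma bump_norm_apply (X : Type*) [NormedAddCommGroup X] (k : ℕ)
    (x : ↥(Metric.closedBall (0 : X) 1)) : ‖bump X k x‖ = tent k ‖(x : X)‖ := by
  rw [bump_apply, Complex.norm_real, Real.norm_of_nonneg (tent_nonneg _ _)]

lemma bump_norm (X : Type*) [NormedAddCommGroup X] [NormedSpace ℂ X] [Nontrivial X] (k : ℕ) :
    ‖bump X k‖ = 1 := by
  apply le_antisymm
  · rw [BoundedContinuousFunction.norm_le zero_le_one]
    intro x
    rw [bump_norm_apply]
    exact tent_le_one _ _
  · letI : NormedSpace ℝ X := NormedSpace.restrictScalars ℝ ℂ X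
    have h0 : (0 : ℝ) ≤ (2 ^ k)⁻¹ := by positivity
    have h1 : ((2 : ℝ) ^ k)⁻¹ ≤ 1 := inv_le_one_of_one_le₀ (one_le_pow₀ (by norm_num))
    obtain ⟨v, hv⟩ := exists_norm_eq X h0
    have := (bump X k).norm_coe_le_norm ⟨v, by simpa [hv] using h1⟩
    rw [bump_norm_apply] at this
    refine le_trans (le_of_eq ?_) this
    simp [tent, hv]

lemma mix_le (h : ℂ) (hh : ‖h‖ ≤ 1) (t : ℝ) (h0 : 0 ≤ t) (h1 : t ≤ 1) (e : ℂ) (he : ‖e‖ ≤ 1) :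
    ‖h - h * t + e * t‖ ≤ 1 := by
  have : h - h * t + e * t = h * ((1 - t : ℝ) : ℂ) + e * t := by push_cast; ring
  rw [this]
  refine (norm_add_le _ _).trans ?_
  rw [norm_mul, norm_mul, Complex.norm_real, Complex.norm_real, Real.norm_of_nonneg h0,
    Real.norm_of_nonneg (by linarith)]
  nlinarith

/- STATEMENT 5: For a nontrivial complex Banach space `X`, the Banach algebra
`C_b(B_X)` of bounded continuous complex-valued functions on the closed unit ball
of `X` has the symmetric strong diameter two property. -/
theorem stmt_5 {X : Type*} [NormedAddCommGroup X] [NormedSpace ℂ X] [CompleteSpace X]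
    [Nontrivial X] :
    ∀ (n : ℕ)
      (ψ : Fin n → ((↥(Metric.closedBall (0 : X) 1) →ᵇ ℂ) →L[ℂ] ℂ)) (δ : Fin n → ℝ),
      (∀ i, ‖ψ i‖ = 1) → (∀ i, 0 < δ i) → ∀ ε > (0 : ℝ),
      ∃ (f : Fin n → (↥(Metric.closedBall (0 : X) 1) →ᵇ ℂ))
        (g : ↥(Metric.closedBall (0 : X) 1) →ᵇ ℂ), ‖g‖ ≤ 1 ∧ 1 - ε < ‖g‖ ∧
        ∀ i : Fin n,
          (‖f i‖ ≤ 1 ∧ 1 - δ i < (ψ i (f i)).re) ∧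
          (‖f i + g‖ ≤ 1 ∧ 1 - δ i < (ψ i (f i + g)).re) ∧
          (‖f i - g‖ ≤ 1 ∧ 1 - δ i < (ψ i (f i - g)).re) := by
  intro n ψ δ hψ hδ ε hε
  have hex : ∀ i, ∃ h : ↥(Metric.closedBall (0 : X) 1) →ᵇ ℂ, ‖h‖ ≤ 1 ∧
      1 - δ i < (ψ i h).re := by
    intro i
    obtain ⟨x, hx, hx2⟩ := (ψ i).exists_lt_apply_of_lt_opNorm
      (show 1 - δ i < ‖ψ i‖ by rw [hψ i]; linarith [hδ i])
    obtain ⟨c, hc, hc2⟩ := exists_phase (ψ i x)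
    refine ⟨c • x, ?_, ?_⟩
    · rw [norm_smul]
      exact mul_le_one₀ hc (norm_nonneg _) hx.le
    · rw [map_smul, smul_eq_mul, hc2, Complex.ofReal_re]
      exact hx2
  choose h hh1 hh2 using hex
  have hsm : ∀ i, ∀ᶠ k in Filter.atTop,
      ‖ψ i (h i * bump X k)‖ + ‖ψ i (bump X k)‖ < (ψ i (h i)).re - (1 - δ i) := by
    intro i
    have t1 := tendsto_zero (ψ i) (hψ i) (fun k => h i * bump X k) (fun s x => by
      refine le_trans (Finset.sum_le_sum fun k _ => ?_) (tent_sum s ‖(x : X)‖)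
      rw [BoundedContinuousFunction.mul_apply, norm_mul, bump_norm_apply]
      exact mul_le_of_le_one_left (tent_nonneg _ _) (((h i).norm_coe_le_norm x).trans (hh1 i)))
    have t2 := tendsto_zero (ψ i) (hψ i) (fun k => bump X k) (fun s x => by
      refine le_trans (Finset.sum_le_sum fun k _ => ?_) (tent_sum s ‖(x : X)‖)
      rw [bump_norm_apply])
    have t3 := t1.add t2
    rw [add_zero] at t3
    exact t3.eventually (gt_mem_nhds (by linarith [hh2 i]))
  obtain ⟨k, hk⟩ := (Filter.eventually_all.2 hsm).exists
  have hb := bump_norm X k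
  refine ⟨fun i => h i - h i * bump X k, bump X k, hb.le, by linarith, fun i => ?_⟩
  have hki := hk i
  have a1 := abs_le.1 (Complex.abs_re_le_norm (ψ i (h i * bump X k)))
  have a2 := abs_le.1 (Complex.abs_re_le_norm (ψ i (bump X k)))
  have a3 := norm_nonneg (ψ i (bump X k))
  have hx1 : ∀ x, ‖h i x‖ ≤ 1 := fun x => ((h i).norm_coe_le_norm x).trans (hh1 i)
  have m := fun x : ↥(Metric.closedBall (0 : X) 1) =>
    mix_le (h i x) (hx1 x) _ (tent_nonneg k ‖(x : X)‖) (tent_le_one k ‖(x : X)‖)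
  refine ⟨⟨?_, ?_⟩, ⟨?_, ?_⟩, ⟨?_, ?_⟩⟩
  · rw [BoundedContinuousFunction.norm_le zero_le_one]
    intro x
    have := m x 0 (by simp)
    simpa [bump_apply] using this
  · simp only [map_sub, Complex.sub_re]
    linarith
  · rw [BoundedContinuousFunction.norm_le zero_le_one]
    intro x
    have := m x 1 (by simp)
    simpa [bump_apply] using this
  · simp only [map_sub, map_add, Complex.sub_re, Complex.add_re]
    linarith
  · rw [BoundedContinuousFunction.norm_le zero_le_one]
    intro x
    have := m x (-1) (by simp)
    simpa [bump_apply, sub_eq_add_neg] using this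
  · simp only [map_sub, Complex.sub_re]
    linarith
end

section
/- Let K be a compact Hausdorff space, X a nontrivial complex Banach space, and S an X-valued function space over a uniform algebra on K, i.e., a closed subspace S of C(K,X) such that the base algebra A := {x* ∘ f : f ∈ S, x* ∈ X*} is a uniform algebra on K and φ·f ∈ S for every φ ∈ A and f ∈ S. If the base algebra A is infinite-dimensional, then S has the diameter two property: every nonempty relatively weakly open subset of the closed unit ball B_S has diameter two. -/
set_option maxHeartbeats 1000000
set_option synthInstance.maxHeartbeats 1000000

theorem aux_bounds (n : ℕ) (z h : ℂ) (hz : ‖z‖ ≤ 1) (hh : h * (1 + n * (1 - z)) = 1) :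
    ‖h‖ ≤ 1 ∧ n * ‖1 - z‖ * ‖h‖ ≤ 1 ∧ ‖1 - h‖ ≤ 1 ∧ ‖1 - h‖ ≤ n * ‖1 - z‖ ∧
      (1 + n * ‖1 - z‖) * ‖h‖ ≤ 2 := by
  have hre : 0 ≤ (1 - z).re := by
    have := Complex.re_le_norm z
    simp; linarith
  set w := 1 - z with hw
  have hsq : 1 + (n * ‖w‖) ^ 2 ≤ ‖1 + n * w‖ ^ 2 := by
    have e1 : ‖1 + n * w‖ ^ 2 = (1 + n * w.re) ^ 2 + (n * w.im) ^ 2 := by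
      rw [← Complex.normSq_eq_norm_sq, Complex.normSq_apply]; simp; ring
    have e2 : ‖w‖ ^ 2 = w.re ^ 2 + w.im ^ 2 := by
      rw [← Complex.normSq_eq_norm_sq, Complex.normSq_apply]; ring
    have : 0 ≤ (n : ℝ) * w.re := by positivity
    rw [mul_pow, e2, e1]; nlinarith
  have hn : ‖h‖ * ‖1 + n * w‖ = 1 := by rw [← norm_mul, hh, norm_one]
  have hd0 : 0 ≤ ‖1 + n * w‖ := norm_nonneg _
  have hnw : 0 ≤ n * ‖w‖ := by positivity
  have h0 := norm_nonneg h
  have hd1 : 1 ≤ ‖1 + n * w‖ := by nlinarith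
  have hd2 : n * ‖w‖ ≤ ‖1 + n * w‖ := by nlinarith
  have hd3 : 1 + n * ‖w‖ ≤ 2 * ‖1 + n * w‖ := by nlinarith
  have hle : ‖h‖ ≤ 1 := by nlinarith
  have h1 : 1 - h = h * (n * w) := by linear_combination -hh
  have hn1 : ‖1 - h‖ = ‖h‖ * (n * ‖w‖) := by rw [h1]; simp
  refine ⟨hle, by nlinarith, by rw [hn1]; nlinarith, by rw [hn1]; nlinarith, by nlinarith⟩

theorem aux_telescope (n : ℕ) (z h h' : ℂ) (hz : ‖z‖ ≤ 1) (hh : h * (1 + n * (1 - z)) = 1)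
    (hh' : h' * (1 + (n + 1 : ℕ) * (1 - z)) = 1) :
    ‖h' - h‖ ≤ 4 * (1 / (1 + n * ‖1 - z‖) - 1 / (1 + (n + 1 : ℕ) * ‖1 - z‖)) := by
  obtain ⟨-, -, -, -, b1⟩ := aux_bounds n z h hz hh
  obtain ⟨-, -, -, -, b2⟩ := aux_bounds (n + 1) z h' hz hh'
  have e : h' - h = - (h * h' * (1 - z)) := by
    push_cast at hh'
    linear_combination h * hh' - h' * hh
  rw [e, norm_neg, norm_mul, norm_mul]
  set x := ‖1 - z‖
  have hx : 0 ≤ x := norm_nonneg _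
  have p1 : 0 < 1 + n * x := by positivity
  have p2 : 0 < 1 + (n + 1 : ℕ) * x := by positivity
  have e2 : 1 / (1 + n * x) - 1 / (1 + (n + 1 : ℕ) * x)
      = x / ((1 + n * x) * (1 + (n + 1 : ℕ) * x)) := by
    field_simp; push_cast; ring
  rw [e2, ← mul_div_assoc, le_div_iff₀ (by positivity)]
  have : ((1 + n * x) * ‖h‖) * ((1 + (n + 1 : ℕ) * x) * ‖h'‖) ≤ 2 * 2 :=
    mul_le_mul b1 b2 (by positivity) (by norm_num)
  nlinarith

theorem aux_exists_h {K : Type*} [TopologicalSpace K] [CompactSpace K]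
    (A : Subalgebra ℂ C(K, ℂ)) (hA : IsClosed (A : Set C(K, ℂ))) (p : C(K, ℂ)) (hp : p ∈ A)
    (hp1 : ∀ t, ‖p t‖ ≤ 1) (n : ℕ) :
    ∃ h ∈ A, ∀ t, h t * (1 + n * (1 - p t)) = 1 := by
  have : CompleteSpace A := hA.completeSpace_coe
  have hpn : ‖p‖ ≤ 1 := (ContinuousMap.norm_le _ zero_le_one).2 hp1
  let P : A := ⟨p, hp⟩
  let c : ℂ := (n : ℂ) / (n + 1)
  have hn1 : (n : ℂ) + 1 ≠ 0 := by exact_mod_cast Nat.succ_ne_zero n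
  have hc : ‖c‖ < 1 := by
    have e : c = (((n : ℝ) / (n + 1) : ℝ) : ℂ) := by simp [c]
    rw [e, Complex.norm_real, Real.norm_of_nonneg (by positivity), div_lt_one (by positivity)]
    linarith
  have hlt : ‖c • P‖ < 1 := by
    have hP : ‖P‖ ≤ 1 := hpn
    calc ‖c • P‖ ≤ ‖c‖ * ‖P‖ := norm_smul_le _ _
      _ ≤ ‖c‖ * 1 := by gcongr
      _ < 1 := by simpa using hc
  obtain ⟨y, hy⟩ := (isUnit_one_sub_of_norm_lt_one hlt).exists_right_inv
  refine ⟨((n : ℂ) + 1)⁻¹ • (y : C(K, ℂ)), A.smul_mem y.2 _, fun t => ?_⟩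
  have h1 : (1 - c * p t) * (y : C(K, ℂ)) t = 1 := by
    have := congrArg (fun q : A => (q : C(K, ℂ)) t) hy
    simpa [P] using this
  have h2 : (n + 1) * c = n := by simp only [c]; field_simp
  simp only [ContinuousMap.smul_apply, smul_eq_mul]
  have : (1 + (n : ℂ) * (1 - p t)) = (n + 1) * (1 - c * p t) := by
    linear_combination (p t) * h2
  rw [this]
  field_simp
  linear_combination h1

theorem aux_idem {K : Type*} [TopologicalSpace K] [CompactSpace K]
    (A : Subalgebra ℂ C(K, ℂ)) (hA : IsClosed (A : Set C(K, ℂ))) (p : C(K, ℂ)) (hp : p ∈ A)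
    (hp1 : ∀ t, ‖p t‖ ≤ 1) (ε : ℝ) (hε : 0 < ε) (hiso : ∀ t, p t ≠ 1 → ε ≤ ‖1 - p t‖) :
    ∃ e ∈ A, ∀ t, (p t = 1 → e t = 1) ∧ (p t ≠ 1 → e t = 0) := by
  classical
  have hclopen : IsClopen {t | p t = 1} := by
    refine ⟨isClosed_eq p.continuous continuous_const, ?_⟩
    have : {t | p t = 1} = {t | ‖1 - p t‖ < ε} := by
      ext t
      constructor
      · intro h; simp only [Set.mem_ofPred_eq] at h ⊢; simp [h, hε]
      · intro h; by_contra hne; exact absurd (hiso t hne) (not_le.2 h)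
    rw [this]
    exact isOpen_lt (by fun_prop) continuous_const
  let e : C(K, ℂ) := ⟨fun t => if p t = 1 then 1 else 0, by
    apply Continuous.if
    · intro a ha
      have : frontier {t | p t = 1} = ∅ := hclopen.frontier_eq
      rw [this] at ha; exact absurd ha (Set.notMem_empty _)
    · exact continuous_const
    · exact continuous_const⟩
  have he : ∀ t, e t = if p t = 1 then 1 else 0 := fun t => rfl
  refine ⟨e, ?_, fun t => ⟨fun h => by simp [he, h], fun h => by simp [he, h]⟩⟩
  choose h hhA hh using aux_exists_h A hA p hp hp1
  have hlim : Filter.Tendsto (fun n : ℕ => h (n + 1)) Filter.atTop (nhds e) := by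
    rw [tendsto_iff_norm_sub_tendsto_zero]
    have hz : Filter.Tendsto (fun n : ℕ => (1 / ((n : ℝ) + 1)) * (1 / ε)) Filter.atTop (nhds 0) := by
      simpa using (tendsto_one_div_add_atTop_nhds_zero_nat (𝕜 := ℝ)).mul_const (1 / ε)
    refine squeeze_zero (fun _ => norm_nonneg _) (fun n => ?_) hz
    rw [ContinuousMap.norm_le _ (by positivity)]
    intro t
    have hb := aux_bounds (n + 1) (p t) _ (hp1 t) (hh (n + 1) t)
    have hht := hh (n + 1) t
    simp only [ContinuousMap.sub_apply, he]
    split_ifs with hpt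
    · rw [hpt] at hht
      have : h (n + 1) t = 1 := by simpa using hht
      rw [this]; simp; positivity
    · have h1 := hiso t hpt
      have h2 := hb.2.1
      rw [sub_zero, one_div_mul_one_div,
        le_div_iff₀ (by positivity)]
      push_cast at h2
      have h0 := norm_nonneg (h (n + 1) t)
      calc ‖h (n + 1) t‖ * (((n : ℝ) + 1) * ε) ≤ ‖h (n + 1) t‖ * (((n : ℝ) + 1) * ‖1 - p t‖) := by
            gcongr
        _ ≤ 1 := by linarith
  exact hA.mem_of_tendsto hlim (Filter.Eventually.of_forall fun n => hhA _)

theorem aux_split {K : Type*} [TopologicalSpace K] [CompactSpace K]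
    (A : Subalgebra ℂ C(K, ℂ)) (hA : IsClosed (A : Set C(K, ℂ)))
    (hiso : ∀ p ∈ A, (∀ t, ‖p t‖ ≤ 1) → ∃ ε > 0, ∀ t, p t ≠ 1 → ε ≤ ‖1 - p t‖)
    (e : C(K, ℂ)) (he : e ∈ A) (hee : e * e = e)
    (hinf : ¬ FiniteDimensional ℂ ((Subalgebra.toSubmodule A).map (LinearMap.mulLeft ℂ e))) :
    ∃ e' ∈ A, e' * e' = e' ∧ e' * e = e' ∧ e' ≠ e ∧
      ¬ FiniteDimensional ℂ ((Subalgebra.toSubmodule A).map (LinearMap.mulLeft ℂ e')) := by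
  have h1 : ∃ f ∈ A, e * f ∉ Submodule.span ℂ {e} := by
    by_contra hcon
    push Not at hcon
    apply hinf
    refine Submodule.finiteDimensional_of_le (S₂ := Submodule.span ℂ {e}) ?_
    rintro _ ⟨f, hf, rfl⟩
    exact hcon f hf
  obtain ⟨f, hf, hfe⟩ := h1
  have h01 : ∀ t, e t = 0 ∨ e t = 1 := fun t => by
    have := congrArg (fun q : C(K, ℂ) => q t) hee
    simp only [ContinuousMap.mul_apply] at this
    by_cases h : e t = 0
    · exact Or.inl h
    · right; exact mul_left_cancel₀ h (by rw [this, mul_one])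
  have h2 : ∃ t1, e t1 = 1 := by
    by_contra hcon
    push Not at hcon
    apply hfe
    have : e = 0 := by ext t; simpa [hcon t] using h01 t
    rw [this]; simp
  obtain ⟨t1, ht1⟩ := h2
  set g : C(K, ℂ) := e * f - (f t1) • e with hg
  have hgA : g ∈ A := A.sub_mem (A.mul_mem he hf) (A.smul_mem he _)
  have hg0 : g ≠ 0 := by
    intro h
    apply hfe
    rw [sub_eq_zero.1 h]
    exact Submodule.smul_mem _ _ (Submodule.mem_span_singleton_self e)
  have hgt1 : g t1 = 0 := by simp [hg, ht1]
  have : Nonempty K := ⟨t1⟩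
  obtain ⟨t0, -, ht0⟩ := isCompact_univ.exists_isMaxOn (Set.univ_nonempty (α := K))
    (f := fun t => ‖g t‖) (by fun_prop)
  have ht0' : ∀ t, ‖g t‖ ≤ ‖g t0‖ := fun t => ht0 (Set.mem_univ t)
  have hgt0 : g t0 ≠ 0 := by
    intro h
    apply hg0
    ext t
    have := ht0' t
    rw [h, norm_zero] at this
    simpa using this
  set φ : C(K, ℂ) := (g t0)⁻¹ • g with hφ
  have hφA : φ ∈ A := A.smul_mem hgA _
  have hφ1 : ∀ t, ‖φ t‖ ≤ 1 := fun t => by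
    simp only [hφ, ContinuousMap.smul_apply, norm_smul, norm_inv]
    rw [inv_mul_le_one₀ (norm_pos_iff.2 hgt0)]
    exact ht0' t
  obtain ⟨ε, hε, hi⟩ := hiso φ hφA hφ1
  obtain ⟨e1, he1A, he1⟩ := aux_idem A hA φ hφA hφ1 ε hε hi
  have he1e1 : e1 * e1 = e1 := by
    ext t
    by_cases h : φ t = 1
    · simp [(he1 t).1 h]
    · simp [(he1 t).2 h]
  have he1e : e1 * e = e1 := by
    ext t
    by_cases h : φ t = 1
    · rcases h01 t with h' | h'
      · exfalso; simp [hφ, hg, h'] at h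
      · simp [h']
    · simp [(he1 t).2 h]
  have hφt1 : φ t1 ≠ 1 := by simp [hφ, hgt1]
  have hφt0 : φ t0 = 1 := by simp [hφ, hgt0]
  have hne1 : e1 ≠ e := by
    intro h
    have := (he1 t1).2 hφt1
    rw [h, ht1] at this
    exact one_ne_zero this
  by_cases hfd : FiniteDimensional ℂ ((Subalgebra.toSubmodule A).map (LinearMap.mulLeft ℂ e1))
  · refine ⟨e - e1, A.sub_mem he he1A, ?_, ?_, ?_, ?_⟩
    · have : e * e1 = e1 := by rw [mul_comm, he1e]
      rw [sub_mul, mul_sub, mul_sub, hee, he1e1, he1e, this]; simp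
    · rw [sub_mul, hee, he1e]
    · intro h
      have h3 : e1 = 0 := by simpa using h
      have := (he1 t0).1 hφt0
      rw [h3] at this; simp at this
    · intro hfd2
      apply hinf
      refine Submodule.finiteDimensional_of_le (S₂ :=
        ((Subalgebra.toSubmodule A).map (LinearMap.mulLeft ℂ e1)) ⊔
        ((Subalgebra.toSubmodule A).map (LinearMap.mulLeft ℂ (e - e1)))) ?_
      rintro _ ⟨q, hq, rfl⟩
      refine Submodule.mem_sup.2 ⟨e1 * q, ⟨q, hq, rfl⟩, (e - e1) * q, ⟨q, hq, rfl⟩, ?_⟩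
      simp [sub_mul]
  · exact ⟨e1, he1A, he1e1, he1e, hne1, hfd⟩

theorem aux_exists_p {K : Type*} [TopologicalSpace K] [CompactSpace K]
    (A : Subalgebra ℂ C(K, ℂ)) (hA : IsClosed (A : Set C(K, ℂ)))
    (hinf : ¬ FiniteDimensional ℂ A) :
    ∃ p ∈ A, (∀ t, ‖p t‖ ≤ 1) ∧ ∀ ε : ℝ, 0 < ε → ∃ t, p t ≠ 1 ∧ ‖1 - p t‖ < ε := by
  by_contra hcon
  push Not at hcon
  have hiso : ∀ p ∈ A, (∀ t, ‖p t‖ ≤ 1) → ∃ ε > 0, ∀ t, p t ≠ 1 → ε ≤ ‖1 - p t‖ := hcon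
  let T := {e : C(K, ℂ) // e ∈ A ∧ e * e = e ∧
    ¬ FiniteDimensional ℂ ((Subalgebra.toSubmodule A).map (LinearMap.mulLeft ℂ e))}
  have hstep : ∀ e : T, ∃ e' : T, e'.1 * e.1 = e'.1 ∧ e'.1 ≠ e.1 := by
    rintro ⟨e, he, hee, hi⟩
    obtain ⟨e', h1, h2, h3, h4, h5⟩ := aux_split A hA hiso e he hee hi
    exact ⟨⟨e', h1, h2, h5⟩, h3, h4⟩
  choose nx hnx1 hnx2 using hstep
  let e0 : T := ⟨1, A.one_mem, one_mul _, by
    intro h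
    apply hinf
    have : (Subalgebra.toSubmodule A).map (LinearMap.mulLeft ℂ (1 : C(K, ℂ)))
        = Subalgebra.toSubmodule A := by
      rw [LinearMap.mulLeft_one, Submodule.map_id]
    rw [this] at h
    exact h⟩
  let E : ℕ → T := fun n => nx^[n] e0
  have hE : ∀ n, E (n + 1) = nx (E n) := fun n => Function.iterate_succ_apply' _ _ _
  let e : ℕ → C(K, ℂ) := fun n => (E n).1
  have heA : ∀ n, e n ∈ A := fun n => (E n).2.1
  have h01 : ∀ n t, e n t = 0 ∨ e n t = 1 := fun n t => by
    have := congrArg (fun q : C(K, ℂ) => q t) (E n).2.2.1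
    simp only [ContinuousMap.mul_apply] at this
    by_cases h : e n t = 0
    · exact Or.inl h
    · right; exact mul_left_cancel₀ h (by rw [mul_one]; exact this)
  have hdec : ∀ n t, e n t = 0 → e (n + 1) t = 0 := fun n t h => by
    have h1 : e (n + 1) * e n = e (n + 1) := by
      simp only [e, hE]; exact hnx1 _
    rw [← h1]; simp [h]
  have hdec' : ∀ t n m, n ≤ m → e n t = 0 → e m t = 0 := fun t n m hnm h => by
    induction m, hnm using Nat.le_induction with
    | base => exact h
    | succ m _ ih => exact hdec m t ih
  have hpt : ∀ n, ∃ t, e n t = 1 ∧ e (n + 1) t = 0 := fun n => by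
    by_contra hc
    push Not at hc
    have h1 : e (n + 1) ≠ e n := by simp only [e, hE]; exact hnx2 _
    apply h1
    ext t
    rcases h01 n t with h | h
    · rw [h, hdec n t h]
    · rw [h]; exact (h01 (n + 1) t).resolve_left (hc t h)
  have hen : ∀ n, ‖e n‖ ≤ 1 := fun n => (ContinuousMap.norm_le _ zero_le_one).2 fun t => by
    rcases h01 n t with h | h <;> simp [h]
  have hgeo : HasSum (fun n : ℕ => ((1 / 2 : ℝ)) ^ (n + 1)) 1 := by
    have := hasSum_geometric_two.mul_left (1 / 2 : ℝ)
    simpa [pow_succ, mul_comm] using this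
  let F : ℕ → C(K, ℂ) := fun n => ((1 / 2 : ℂ) ^ (n + 1)) • e n
  have hFn : ∀ n, ‖F n‖ ≤ (1 / 2 : ℝ) ^ (n + 1) := fun n => by
    calc ‖F n‖ ≤ ‖((1 / 2 : ℂ) ^ (n + 1))‖ * ‖e n‖ := norm_smul_le _ _
      _ ≤ ‖((1 / 2 : ℂ) ^ (n + 1))‖ * 1 := by gcongr; exact hen n
      _ = _ := by simp
  have hsum : Summable F := Summable.of_norm_bounded hgeo.summable hFn
  have hpA : (∑' n, F n) ∈ A := by
    refine hA.mem_of_tendsto hsum.hasSum (Filter.Eventually.of_forall fun s => ?_)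
    exact A.sum_mem fun i _ => A.smul_mem (heA i) _
  have hp1 : ‖∑' n, F n‖ ≤ 1 := tsum_of_norm_bounded hgeo hFn
  obtain ⟨ε, hε, hi⟩ := hiso _ hpA (fun t => (ContinuousMap.norm_coe_le_norm _ t).trans hp1)
  obtain ⟨k, hk⟩ := exists_pow_lt_of_lt_one hε (show (1 / 2 : ℝ) < 1 by norm_num)
  obtain ⟨t, ht1, ht0⟩ := hpt k
  have hval : (∑' n, F n) t = 1 - (1 / 2 : ℂ) ^ (k + 1) := by
    rw [← ContinuousMap.tsum_apply hsum]
    rw [tsum_eq_sum (s := Finset.range (k + 1))]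
    · have : ∀ n ∈ Finset.range (k + 1), F n t = (1 / 2 : ℂ) ^ (n + 1) := fun n hn => by
        have hle : n ≤ k := by simpa [Nat.lt_succ_iff] using hn
        have : e n t = 1 := (h01 n t).resolve_left fun h => by
          have := hdec' t n k hle h
          rw [ht1] at this; exact one_ne_zero this
        simp [F, this]
      rw [Finset.sum_congr rfl this]
      have : ∀ m : ℕ, ∑ n ∈ Finset.range m, (1 / 2 : ℂ) ^ (n + 1) = 1 - (1 / 2) ^ m := fun m => by
        induction m with
        | zero => simp
        | succ m ih => rw [Finset.sum_range_succ, ih]; ring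
      exact this _
    · intro n hn
      have hle : k + 1 ≤ n := by simpa using hn
      simp [F, hdec' t _ n hle ht0]
  have hne : (∑' n, F n) t ≠ 1 := by rw [hval]; simp
  have := hi t hne
  rw [hval] at this
  simp only [sub_sub_cancel, norm_pow] at this
  have h4 : ‖(1 / 2 : ℂ)‖ = 1 / 2 := by simp
  rw [h4, pow_succ] at this
  have : (0 : ℝ) < (1 / 2) ^ k := by positivity
  linarith

theorem aux_cauchy {K : Type*} [TopologicalSpace K] [CompactSpace K]
    {X : Type*} [NormedAddCommGroup X] [NormedSpace ℂ X]
    (S : Submodule ℂ C(K, X)) (p : C(K, ℂ)) (hp1 : ∀ t, ‖p t‖ ≤ 1) (h : ℕ → C(K, ℂ))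
    (hh : ∀ n t, h n t * (1 + n * (1 - p t)) = 1) (f : C(K, X))
    (hS : ∀ n, h n • f ∈ S) (Λ : S →L[ℂ] ℂ) :
    CauchySeq (fun n => Λ ⟨h n • f, hS n⟩) := by
  apply cauchySeq_of_summable_dist
  let d : ℕ → S := fun n => ⟨h (n + 1) • f, hS (n + 1)⟩ - ⟨h n • f, hS n⟩
  have hd : ∀ n, dist (Λ ⟨h n • f, hS n⟩) (Λ ⟨h (n + 1) • f, hS (n + 1)⟩) = ‖Λ (d n)‖ := fun n => by
    rw [dist_comm, dist_eq_norm, ← map_sub]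
  simp only [Nat.succ_eq_add_one, hd]
  refine summable_of_sum_range_le (c := ‖Λ‖ * (4 * ‖f‖)) (fun n => norm_nonneg _) (fun N => ?_)
  choose c hc1 hc2 using fun n => RCLike.exists_norm_eq_mul_self (Λ (d n))
  have e1 : ((∑ n ∈ Finset.range N, ‖Λ (d n)‖ : ℝ) : ℂ)
      = Λ (∑ n ∈ Finset.range N, c n • d n) := by
    rw [map_sum, Complex.ofReal_sum]
    refine Finset.sum_congr rfl fun n _ => ?_
    rw [map_smul, smul_eq_mul, ← hc2 n]; rfl
  have e2 : (∑ n ∈ Finset.range N, ‖Λ (d n)‖) = ‖Λ (∑ n ∈ Finset.range N, c n • d n)‖ := by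
    rw [← e1, Complex.norm_real, Real.norm_of_nonneg (Finset.sum_nonneg fun _ _ => norm_nonneg _)]
  rw [e2]
  refine (Λ.le_opNorm _).trans ?_
  gcongr
  rw [Submodule.coe_norm, ContinuousMap.norm_le _ (by positivity)]
  intro t
  have e3 : ((∑ n ∈ Finset.range N, c n • d n : S) : C(K, X)) t
      = ∑ n ∈ Finset.range N, (c n * (h (n + 1) t - h n t)) • f t := by
    simp only [AddSubmonoidClass.coe_finsetSum, ContinuousMap.coe_sum, Finset.sum_apply]
    refine Finset.sum_congr rfl fun n _ => ?_
    simp [d, mul_smul, sub_smul]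
  rw [e3]
  calc ‖∑ n ∈ Finset.range N, (c n * (h (n + 1) t - h n t)) • f t‖
      ≤ ∑ n ∈ Finset.range N, 4 * (1 / (1 + (n : ℕ) * ‖1 - p t‖)
          - 1 / (1 + (n + 1 : ℕ) * ‖1 - p t‖)) * ‖f t‖ := by
        refine norm_sum_le_of_le _ fun n _ => ?_
        rw [norm_smul, norm_mul, hc1, one_mul]
        gcongr
        exact aux_telescope n (p t) _ _ (hp1 t) (hh n t) (hh (n + 1) t)
    _ = 4 * (1 - 1 / (1 + (N : ℕ) * ‖1 - p t‖)) * ‖f t‖ := by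
        rw [← Finset.sum_mul, ← Finset.mul_sum,
          Finset.sum_range_sub' (fun n : ℕ => 1 / (1 + (n : ℝ) * ‖1 - p t‖))]
        simp
    _ ≤ 4 * 1 * ‖f‖ := by
        have : 0 ≤ 1 / (1 + (N : ℕ) * ‖1 - p t‖) := by positivity
        gcongr
        · linarith
        · exact f.norm_coe_le_norm t
    _ = 4 * ‖f‖ := by ring

theorem aux_step {K : Type*} [TopologicalSpace K] [CompactSpace K]
    {X : Type*} [NormedAddCommGroup X] [NormedSpace ℂ X]
    (p : C(K, ℂ)) (hp1 : ∀ t, ‖p t‖ ≤ 1)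
    (hp2 : ∀ ε : ℝ, 0 < ε → ∃ t, p t ≠ 1 ∧ ‖1 - p t‖ < ε) (h : ℕ → C(K, ℂ))
    (hh : ∀ n t, h n t * (1 + n * (1 - p t)) = 1) (f : C(K, X)) (c₀ : ℝ) (hc₀ : 0 < c₀)
    (hf : ∀ t, c₀ ≤ ‖f t‖) (f₀ : C(K, X)) (hf₀ : ‖f₀‖ ≤ 1) (ε : ℝ) (hε : 0 < ε) (N : ℕ) :
    ∃ n a b m : ℕ, N ≤ n ∧ N ≤ a ∧ N ≤ b ∧ N ≤ m ∧ c₀ / 2 ≤ ‖(h a - h b) • f‖ ∧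
      ∀ t, ‖(1 - h n + h m) t‖ * ‖f₀ t‖ + ‖(h a - h b) t‖ * ‖f t‖ / ‖(h a - h b) • f‖
        ≤ 1 + 2 * ε := by
  obtain ⟨tt, -⟩ := hp2 1 one_pos
  have hfpos : 0 < ‖f‖ := (hc₀.trans_le (hf tt)).trans_le (f.norm_coe_le_norm tt)
  set δ : ℝ := ε * (c₀ / 2) / ‖f‖ with hδ
  have hδ0 : 0 < δ := by positivity
  obtain ⟨n, en⟩ : ∃ n, n = N + 1 := ⟨_, rfl⟩
  have hn0 : (0 : ℝ) < n := by rw [en]; positivity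
  obtain ⟨a', ha'⟩ := exists_nat_ge (4 * n / (δ * ε))
  obtain ⟨a, ea⟩ : ∃ a, a = a' + n := ⟨_, rfl⟩
  have ha0 : (0 : ℝ) < a := by rw [ea]; push_cast; positivity
  have ha : 4 * n ≤ a * (δ * ε) := by
    rw [div_le_iff₀ (by positivity)] at ha'
    refine ha'.trans ?_
    gcongr; omega
  obtain ⟨t₁, ht₁, ht₁'⟩ := hp2 (1 / (4 * a)) (by positivity)
  have hx₁ : 0 < ‖1 - p t₁‖ := norm_pos_iff.2 (sub_ne_zero.2 (Ne.symm ht₁))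
  obtain ⟨b', hb'⟩ := exists_nat_ge (4 / ‖1 - p t₁‖)
  obtain ⟨b, eb⟩ : ∃ b, b = b' + a := ⟨_, rfl⟩
  have hab : (a : ℝ) ≤ b := by rw [eb]; push_cast; linarith [Nat.cast_nonneg (α := ℝ) b']
  have hb : 4 ≤ b * ‖1 - p t₁‖ := by
    rw [div_le_iff₀ (by positivity)] at hb'
    refine hb'.trans ?_
    gcongr; omega
  obtain ⟨m1, hm1'⟩ := exists_nat_ge (4 * b / (δ * ε))
  obtain ⟨m2, hm2'⟩ := exists_nat_ge (n / (ε * ε))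
  obtain ⟨m, em⟩ : ∃ m, m = m1 + m2 + N := ⟨_, rfl⟩
  have hm1 : 4 * b ≤ m * (δ * ε) := by
    rw [div_le_iff₀ (by positivity)] at hm1'
    refine hm1'.trans ?_
    gcongr; omega
  have hm2 : n ≤ m * (ε * ε) := by
    rw [div_le_iff₀ (by positivity)] at hm2'
    refine hm2'.trans ?_
    gcongr; omega
  have hm0 : (0 : ℝ) < m := by
    by_contra hc
    have : 0 < ε * ε := by positivity
    nlinarith
  clear_value δ
  have B := fun k t => aux_bounds k (p t) _ (hp1 t) (hh k t)
  have hlow : c₀ / 2 ≤ ‖(h a - h b) • f‖ := by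
    refine le_trans ?_ (ContinuousMap.norm_coe_le_norm _ t₁)
    have e : ((h a - h b) • f) t₁ = (h a t₁ - h b t₁) • f t₁ := rfl
    rw [e, norm_smul]
    have h1 : ‖1 - h a t₁‖ ≤ 1 / 4 := by
      refine (B a t₁).2.2.2.1.trans ?_
      calc (a : ℝ) * ‖1 - p t₁‖ ≤ a * (1 / (4 * a)) := by gcongr
        _ = 1 / 4 := by field_simp
    have h2 : ‖h b t₁‖ ≤ 1 / 4 := by
      have := (B b t₁).2.1
      nlinarith [norm_nonneg (h b t₁)]
    have h3 : 1 ≤ ‖1 - h a t₁‖ + ‖h a t₁ - h b t₁‖ + ‖h b t₁‖ := by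
      calc (1 : ℝ) = ‖(1 - h a t₁) + (h a t₁ - h b t₁) + h b t₁‖ := by simp
        _ ≤ _ := norm_add₃_le
    have h4 : 1 / 2 ≤ ‖h a t₁ - h b t₁‖ := by linarith
    calc c₀ / 2 = 1 / 2 * c₀ := by ring
      _ ≤ _ := by gcongr; exact hf t₁
  refine ⟨n, a, b, m, by omega, by omega, by omega, by omega, hlow, fun t => ?_⟩
  set M := ‖(h a - h b) • f‖ with hM
  have hM0 : 0 < M := lt_of_lt_of_le (by positivity) hlow
  have hf₀t : ‖f₀ t‖ ≤ 1 := (f₀.norm_coe_le_norm t).trans hf₀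
  have ev : (1 - h n + h m) t = (1 - h n t) + h m t := rfl
  have eg : (h a - h b) t = h a t - h b t := rfl
  set x := ‖1 - p t‖ with hx
  have hx0 : 0 ≤ x := norm_nonneg _
  have hv : ‖(1 - h n + h m) t‖ ≤ ‖1 - h n t‖ + ‖h m t‖ := by rw [ev]; exact norm_add_le _ _
  obtain ⟨-, -, n3, n4, -⟩ := B n t
  obtain ⟨m1, m2, -, -, -⟩ := B m t
  obtain ⟨-, a2, -, a4, -⟩ := B a t
  obtain ⟨-, b2, -, b4, -⟩ := B b t
  rw [← hx] at n4 m2 a2 a4 b2 b4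
  have hmn := norm_nonneg (h m t)
  have hvf : ‖(1 - h n + h m) t‖ * ‖f₀ t‖ ≤ ‖1 - h n t‖ + ‖h m t‖ :=
    (mul_le_of_le_one_right (norm_nonneg _) hf₀t).trans hv
  have hu1 : ‖(h a - h b) t‖ * ‖f t‖ / M ≤ 1 := by
    rw [div_le_one hM0, ← norm_smul]
    exact ContinuousMap.norm_coe_le_norm ((h a - h b) • f) t
  by_cases hcase : ‖(h a - h b) t‖ ≤ δ
  · have hu : ‖(h a - h b) t‖ * ‖f t‖ / M ≤ ε := by
      rw [div_le_iff₀ hM0]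
      calc ‖(h a - h b) t‖ * ‖f t‖ ≤ δ * ‖f‖ := by
            gcongr; exact f.norm_coe_le_norm t
        _ = ε * (c₀ / 2) := by rw [hδ]; exact div_mul_cancel₀ _ hfpos.ne'
        _ ≤ ε * M := by gcongr
    have hv1 : ‖1 - h n t‖ + ‖h m t‖ ≤ 1 + ε := by
      by_cases hnx : n * x ≤ ε
      · linarith
      · have hnx' : ε < n * x := not_le.1 hnx
        have : ‖h m t‖ ≤ ε := by
          by_contra hc
          have hc' : ε < ‖h m t‖ := not_le.1 hc
          have k1 : (n : ℝ) * (x * ‖h m t‖) ≤ m * (ε * ε) * (x * ‖h m t‖) := by gcongr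
          have k2 : m * (ε * ε) * (x * ‖h m t‖) ≤ ε * ε := by
            calc m * (ε * ε) * (x * ‖h m t‖) = (ε * ε) * (m * x * ‖h m t‖) := by ring
              _ ≤ (ε * ε) * 1 := by gcongr
              _ = ε * ε := mul_one _
          have k3 : ε * ε < (n * x) * ‖h m t‖ := by
            apply mul_lt_mul'' hnx' hc' hε.le hε.le
          linarith [mul_assoc (n : ℝ) x ‖h m t‖]
        linarith
    linarith
  · have hg : δ < ‖(h a - h b) t‖ := not_le.1 hcase
    have g1 : ‖(h a - h b) t‖ ≤ ‖h a t‖ + ‖h b t‖ := by rw [eg]; exact norm_sub_le _ _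
    have g2 : ‖(h a - h b) t‖ ≤ 2 * b * x := by
      have : ‖(h a - h b) t‖ ≤ ‖1 - h b t‖ + ‖1 - h a t‖ := by
        rw [eg, show h a t - h b t = (1 - h b t) - (1 - h a t) by ring]; exact norm_sub_le _ _
      nlinarith
    have hxδ : δ < 2 * b * x := hg.trans_le g2
    have hxa : a * x * δ ≤ 2 := by
      have k1 : a * x * ‖h b t‖ ≤ b * x * ‖h b t‖ := by gcongr
      have k2 : a * x * δ ≤ a * x * (‖h a t‖ + ‖h b t‖) := by gcongr; linarith
      nlinarith
    have hx00 : 0 < x := by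
      by_contra hc
      have : x = 0 := le_antisymm (not_lt.1 hc) hx0
      rw [this] at hxδ; linarith
    have v1 : n * x ≤ ε / 2 := by
      have k : (4 * n) * x ≤ a * (δ * ε) * x := by gcongr
      have k' : a * x * δ * ε ≤ 2 * ε := by gcongr
      nlinarith
    have v2 : ‖h m t‖ ≤ ε / 2 := by
      have k : (4 * b) * (x * ‖h m t‖) ≤ m * (δ * ε) * (x * ‖h m t‖) := by gcongr
      have k1 : (δ * ε) * (m * x * ‖h m t‖) ≤ (δ * ε) * 1 := by gcongr
      have k2 : δ * ‖h m t‖ ≤ 2 * b * x * ‖h m t‖ := by gcongr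
      have k3 : δ * (2 * ‖h m t‖) ≤ δ * ε := by nlinarith
      have := le_of_mul_le_mul_left k3 hδ0
      linarith
    linarith

theorem stmt_7 {K : Type*} [TopologicalSpace K] [CompactSpace K] [T2Space K]
    {X : Type*} [NormedAddCommGroup X] [NormedSpace ℂ X] [CompleteSpace X] [Nontrivial X]
    (S : Submodule ℂ C(K, X)) (hSclosed : IsClosed (S : Set C(K, X)))
    (A : Subalgebra ℂ C(K, ℂ))
    (hAbase : (A : Set C(K, ℂ)) =
      {g : C(K, ℂ) | ∃ f ∈ S, ∃ φ : X →L[ℂ] ℂ, ∀ t : K, g t = φ (f t)})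
    (hAclosed : IsClosed (A : Set C(K, ℂ)))
    (hAsep : ∀ s t : K, s ≠ t → ∃ f ∈ A, f s ≠ f t)
    (hmul : ∀ φ ∈ A, ∀ f ∈ S, φ • f ∈ S)
    (hAinf : ¬ FiniteDimensional ℂ A) :
    ∀ W : Set (WeakSpace ℂ S), IsOpen W →
      ((⇑(toWeakSpace ℂ S) ⁻¹' W) ∩ Metric.closedBall (0 : S) 1).Nonempty →
      Metric.diam ((⇑(toWeakSpace ℂ S) ⁻¹' W) ∩ Metric.closedBall (0 : S) 1) = 2 := by
  intro W hW hne
  obtain ⟨F₀, hF₀W, hF₀B⟩ := hne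
  obtain ⟨f₀, hf₀S⟩ := F₀
  have hf₀ : ‖f₀‖ ≤ 1 := by simpa using hF₀B
  obtain ⟨p, hpA, hp1, hp2⟩ := aux_exists_p A hAclosed hAinf
  choose h hhA hh using aux_exists_h A hAclosed p hpA hp1
  have hone : (1 : C(K, ℂ)) ∈ (A : Set C(K, ℂ)) := A.one_mem
  rw [hAbase] at hone
  obtain ⟨f, hfS, φ, hφ⟩ := hone
  have hf : ∀ t, 1 / (‖φ‖ + 1) ≤ ‖f t‖ := fun t => by
    have h1 : (1 : ℂ) = φ (f t) := hφ t
    have h2 := φ.le_opNorm (f t)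
    rw [← h1, norm_one] at h2
    rw [div_le_iff₀ (by positivity)]
    nlinarith [norm_nonneg (f t)]
  set c₀ : ℝ := 1 / (‖φ‖ + 1)
  have hc₀ : 0 < c₀ := by positivity
  let ε : ℕ → ℝ := fun k => 1 / ((k : ℝ) + 1)
  have hε : ∀ k, 0 < ε k := fun k => by simp only [ε]; positivity
  have hεlim : Filter.Tendsto ε Filter.atTop (nhds 0) := tendsto_one_div_add_atTop_nhds_zero_nat
  choose n a b m hn ha hb hm hlow hbd using fun k =>
    aux_step p hp1 hp2 h hh f c₀ hc₀ hf f₀ hf₀ (ε k) (hε k) k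
  have inf : ∀ (u : ℕ → ℕ), (∀ k, k ≤ u k) → Filter.Tendsto u Filter.atTop Filter.atTop :=
    fun u hu => Filter.tendsto_atTop_mono hu Filter.tendsto_id
  have hS₀ : ∀ k, h k • f₀ ∈ S := fun k => hmul _ (hhA k) _ hf₀S
  have hS₁ : ∀ k, h k • f ∈ S := fun k => hmul _ (hhA k) _ hfS
  let P : ℕ → S := fun k => ⟨h k • f₀, hS₀ k⟩
  let Q : ℕ → S := fun k => ⟨h k • f, hS₁ k⟩
  let F₀ : S := ⟨f₀, hf₀S⟩
  let M : ℕ → ℝ := fun k => ‖Q (a k) - Q (b k)‖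
  have hMe : ∀ k, M k = ‖(h (a k) - h (b k)) • f‖ := fun k => by
    have : (h (a k) - h (b k)) • f = h (a k) • f - h (b k) • f := by
      ext t; exact sub_smul _ _ _
    rw [this]; rfl
  have hM0 : ∀ k, 0 < M k := fun k => by
    rw [hMe]; exact lt_of_lt_of_le (by positivity) (hlow k)
  let U : ℕ → S := fun k => (((M k)⁻¹ : ℝ) : ℂ) • (Q (a k) - Q (b k))
  let R : ℕ → ℝ := fun k => 1 + 2 * ε k
  have hR0 : ∀ k, 0 < R k := fun k => by have := hε k; simp only [R]; positivity
  have hRlim : Filter.Tendsto (fun k => (R k)⁻¹) Filter.atTop (nhds 1) := by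
    have : Filter.Tendsto R Filter.atTop (nhds (1 + 2 * 0)) := (hεlim.const_mul 2).const_add 1
    have := this.inv₀ (by norm_num)
    simpa using this
  -- the two sequences
  let G : ℂ → ℕ → S := fun s k =>
    (((R k)⁻¹ : ℝ) : ℂ) • (F₀ - (P (n k) - P (m k)) + s • U k)
  have hUn : ∀ k, ‖U k‖ = 1 := fun k => by
    simp only [U, norm_smul, Complex.norm_real, Real.norm_of_nonneg (inv_nonneg.2 (hM0 k).le)]
    exact inv_mul_cancel₀ (hM0 k).ne'
  have hGB : ∀ s : ℂ, ‖s‖ = 1 → ∀ k, ‖G s k‖ ≤ 1 := fun s hs k => by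
    simp only [G, norm_smul, Complex.norm_real, Real.norm_of_nonneg (inv_nonneg.2 (hR0 k).le)]
    rw [inv_mul_le_one₀ (hR0 k), Submodule.coe_norm, ContinuousMap.norm_le _ (hR0 k).le]
    intro t
    have e : ((F₀ - (P (n k) - P (m k)) + s • U k : S) : C(K, X)) t
        = (1 - h (n k) + h (m k)) t • f₀ t
          + s • (((M k)⁻¹ : ℝ) : ℂ) • ((h (a k) - h (b k)) t • f t) := by
      have e1 : ((F₀ - (P (n k) - P (m k)) + s • U k : S) : C(K, X)) t
        = f₀ t - (h (n k) t • f₀ t - h (m k) t • f₀ t)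
          + s • (((M k)⁻¹ : ℝ) : ℂ) • (h (a k) t • f t - h (b k) t • f t) := rfl
      rw [e1]
      simp only [ContinuousMap.sub_apply, ContinuousMap.add_apply, ContinuousMap.one_apply,
        sub_smul, add_smul, one_smul]
      abel
    rw [e]
    refine (norm_add_le _ _).trans (le_trans (le_of_eq ?_) (hbd k t))
    rw [norm_smul, norm_smul, norm_smul, norm_smul, hs, Complex.norm_real,
      Real.norm_of_nonneg (inv_nonneg.2 (hM0 k).le), hMe]
    ring
  have hGlim : ∀ s : ℂ, Filter.Tendsto (fun k => toWeakSpace ℂ S (G s k)) Filter.atTop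
      (nhds (toWeakSpace ℂ S F₀)) := fun s => by
    have key : ∀ Λ : S →L[ℂ] ℂ, Filter.Tendsto (fun k => Λ (G s k)) Filter.atTop (nhds (Λ F₀)) := by
      intro Λ
      obtain ⟨l₀, hl₀⟩ := cauchySeq_tendsto_of_complete (aux_cauchy S p hp1 h hh f₀ hS₀ Λ)
      obtain ⟨l₁, hl₁⟩ := cauchySeq_tendsto_of_complete (aux_cauchy S p hp1 h hh f hS₁ Λ)
      have d₀ : Filter.Tendsto (fun k => Λ (P (n k)) - Λ (P (m k))) Filter.atTop (nhds 0) := by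
        simpa using (hl₀.comp (inf n hn)).sub (hl₀.comp (inf m hm))
      have d₁ : Filter.Tendsto (fun k => Λ (Q (a k)) - Λ (Q (b k))) Filter.atTop (nhds 0) := by
        simpa using (hl₁.comp (inf a ha)).sub (hl₁.comp (inf b hb))
      have d₂ : Filter.Tendsto (fun k => (((M k)⁻¹ : ℝ) : ℂ) * (Λ (Q (a k)) - Λ (Q (b k))))
          Filter.atTop (nhds 0) := by
        have z : Filter.Tendsto (fun k => (c₀ / 2)⁻¹ * ‖Λ (Q (a k)) - Λ (Q (b k))‖)
          Filter.atTop (nhds 0) := by simpa using d₁.norm.const_mul ((c₀ / 2)⁻¹)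
        refine squeeze_zero_norm (fun k => ?_) z
        rw [norm_mul, Complex.norm_real, Real.norm_of_nonneg (inv_nonneg.2 (hM0 k).le)]
        gcongr
        rw [hMe]; exact hlow k
      have hRc : Filter.Tendsto (fun k => (((R k)⁻¹ : ℝ) : ℂ)) Filter.atTop (nhds ((1 : ℝ) : ℂ)) :=
        (Complex.continuous_ofReal.tendsto _).comp hRlim
      have d₃ := hRc.mul ((d₀.const_sub (Λ F₀)).add (d₂.const_mul s))
      simp only [Complex.ofReal_one, sub_zero, mul_zero, add_zero, one_mul] at d₃
      refine d₃.congr fun k => ?_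
      simp only [G, U, map_smul, map_add, map_sub, smul_eq_mul]
    have hind : nhds (toWeakSpace ℂ S F₀) = Filter.comap
        (fun (x : WeakSpace ℂ S) (Λ : S →L[ℂ] ℂ) => Λ ((toWeakSpace ℂ S).symm x))
        (nhds (fun Λ : S →L[ℂ] ℂ => Λ F₀)) :=
      nhds_induced (fun (x : WeakSpace ℂ S) (Λ : S →L[ℂ] ℂ) => Λ ((toWeakSpace ℂ S).symm x)) _
    rw [hind, Filter.tendsto_comap_iff, tendsto_pi_nhds]
    exact key
  have hbdd : Bornology.IsBounded ((⇑(toWeakSpace ℂ S) ⁻¹' W) ∩ Metric.closedBall (0 : S) 1) :=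
    Metric.isBounded_closedBall.subset Set.inter_subset_right
  apply le_antisymm
  · refine Metric.diam_le_of_forall_dist_le (by norm_num) ?_
    rintro x ⟨-, hx⟩ y ⟨-, hy⟩
    rw [Metric.mem_closedBall] at hx hy
    have := dist_triangle_right x y 0
    linarith
  · have hlim2 : Filter.Tendsto (fun k => 2 * (R k)⁻¹) Filter.atTop (nhds 2) := by
      simpa using hRlim.const_mul 2
    refine le_of_tendsto hlim2 ?_
    filter_upwards [(hGlim 1).eventually (hW.mem_nhds hF₀W),
      (hGlim (-1)).eventually (hW.mem_nhds hF₀W)] with k h1 h2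
    have hd := Metric.dist_le_diam_of_mem hbdd
      (x := G 1 k) (y := G (-1) k) ⟨h1, by simpa using hGB 1 (by simp) k⟩
      ⟨h2, by simpa using hGB (-1) (by simp) k⟩
    refine le_trans (le_of_eq ?_) hd
    have : G 1 k - G (-1) k = (((R k)⁻¹ : ℝ) : ℂ) • ((2 : ℂ) • U k) := by
      simp only [G]; module
    rw [dist_eq_norm, this, norm_smul, norm_smul, hUn, Complex.norm_real,
      Real.norm_of_nonneg (inv_nonneg.2 (hR0 k).le)]
    simp; ring
end

section
/- Let K be a compact Hausdorff space and X a nontrivial complex Banach space. Let S be a closed subspace of the Banach space C(K,(X,w)) of weakly continuous functions from K to X with the supremum norm, such that the base algebra A := {x* ∘ f : f ∈ S, x* ∈ X*} is a uniform algebra on K and φ·f ∈ S for every φ ∈ A and f ∈ S. If A is infinite-dimensional, then S has the diameter two property: every nonempty relatively weakly open subset of the closed unit ball B_S has diameter two. -/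
open scoped ENNReal

set_option maxHeartbeats 1000000
set_option synthInstance.maxHeartbeats 1000000

section helpers

open Filter Topology Set

/-- `E` is a norming set (boundary) for `A`. -/
def IsBdryFor {K : Type*} [TopologicalSpace K] (A : Subalgebra ℂ C(K, ℂ)) (E : Set K) : Prop :=
  ∀ g ∈ A, ∃ t ∈ E, ∀ s, ‖g s‖ ≤ ‖g t‖

/-- existence of a minimal closed boundary. -/
theorem exists_min_bdry {K : Type*} [TopologicalSpace K] [CompactSpace K] [Nonempty K]
    (A : Subalgebra ℂ C(K, ℂ)) :
    ∃ E : Set K, IsClosed E ∧ IsBdryFor A E ∧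
      ∀ F : Set K, F ⊆ E → IsClosed F → IsBdryFor A F → E ⊆ F := by
  have hK : (univ : Set K) ∈ {E : Set K | IsClosed E ∧ IsBdryFor A E} := by
    refine ⟨isClosed_univ, fun g _ => ?_⟩
    obtain ⟨t, -, ht⟩ := isCompact_univ.exists_isMaxOn (univ_nonempty (α := K))
      (f := fun t => ‖g t‖) (by fun_prop)
    exact ⟨t, mem_univ _, fun s => ht (mem_univ s)⟩
  obtain ⟨E, -, hE⟩ := zorn_superset_nonempty {E : Set K | IsClosed E ∧ IsBdryFor A E} (by
    intro c hc hchain hne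
    refine ⟨⋂₀ c, ⟨isClosed_sInter fun s hs => (hc hs).1, fun g hg => ?_⟩,
      fun s hs => sInter_subset_of_mem hs⟩
    have hcl : IsClosed {t : K | ∀ s, ‖g s‖ ≤ ‖g t‖} := by
      rw [Set.ofPred_forall]
      exact isClosed_iInter fun s => isClosed_le continuous_const (by fun_prop)
    have := hne.coe_sort
    obtain ⟨t, ht⟩ := IsCompact.nonempty_iInter_of_directed_nonempty_isCompact_isClosed
      (fun s : c => (s : Set K) ∩ {t : K | ∀ s, ‖g s‖ ≤ ‖g t‖})
      (by
        intro a b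
        rcases hchain.total a.2 b.2 with h | h
        · exact ⟨a, subset_rfl, inter_subset_inter_left _ h⟩
        · exact ⟨b, inter_subset_inter_left _ h, subset_rfl⟩)
      (fun s => by
        obtain ⟨t, ht, h⟩ := (hc s.2).2 g hg
        exact ⟨t, ht, h⟩)
      (fun s => ((hc s.2).1.inter hcl).isCompact)
      (fun s => (hc s.2).1.inter hcl)
    rw [mem_iInter] at ht
    obtain ⟨s0, hs0⟩ := hne
    exact ⟨t, fun s hs => (ht ⟨s, hs⟩).1, (ht ⟨s0, hs0⟩).2⟩) univ hK
  exact ⟨E, hE.prop.1, hE.prop.2, fun F hF h1 h2 => hE.le_of_le ⟨h1, h2⟩ hF⟩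

theorem bdry_infinite {K : Type*} [TopologicalSpace K] [CompactSpace K]
    (A : Subalgebra ℂ C(K, ℂ)) (hAinf : ¬ FiniteDimensional ℂ A) (E : Set K)
    (hE : IsBdryFor A E) : E.Infinite := by
  intro hfin
  have := hfin.to_subtype
  apply hAinf
  let L : A →ₗ[ℂ] (E → ℂ) :=
    { toFun := fun g t => g.1 t.1
      map_add' := fun _ _ => rfl
      map_smul' := fun _ _ => rfl }
  refine FiniteDimensional.of_injective L ((injective_iff_map_eq_zero L).2 fun g hg => ?_)
  obtain ⟨t, ht, h⟩ := hE g.1 g.2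
  have h0 : g.1 t = 0 := congrFun hg ⟨t, ht⟩
  ext s
  have := h s
  rw [h0, norm_zero] at this
  simpa using this

theorem exists_peak {K : Type*} [TopologicalSpace K] [CompactSpace K]
    (A : Subalgebra ℂ C(K, ℂ)) (E : Set K) (hEc : IsClosed E) (hE : IsBdryFor A E)
    (hmin : ∀ F : Set K, F ⊆ E → IsClosed F → IsBdryFor A F → E ⊆ F)
    (V : Set K) (hV : IsOpen V) (hVE : (V ∩ E).Nonempty) (ε : ℝ) (hε : 0 < ε) :
    ∃ g ∈ A, (∀ t, ‖g t‖ ≤ 1) ∧ (∃ t ∈ E, g t = 1) ∧ ∀ t ∈ E, t ∉ V → ‖g t‖ ≤ ε := by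
  rcases (E \ V).eq_empty_or_nonempty with h0 | hne
  · obtain ⟨t, ht⟩ := hVE
    refine ⟨1, A.one_mem, by simp, ⟨t, ht.2, rfl⟩, fun s hs hsV => ?_⟩
    exact absurd (show s ∈ E \ V from ⟨hs, hsV⟩) (by simp [h0])
  have hcl : IsClosed (E \ V) := hEc.sdiff hV
  have hnot : ¬ IsBdryFor A (E \ V) := by
    intro h
    obtain ⟨t, ht⟩ := hVE
    exact (hmin _ Set.sdiff_subset hcl h ht.2).2 ht.1
  simp only [IsBdryFor, not_forall, not_exists, not_and] at hnot
  obtain ⟨g, hg, hgn⟩ := hnot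
  obtain ⟨t0, ht0, hmax⟩ := hE g hg
  obtain ⟨s, hs, hsmax⟩ := hcl.isCompact.exists_isMaxOn hne
    (f := fun t => ‖g t‖) (by fun_prop)
  have hlt : ‖g s‖ < ‖g t0‖ := by
    by_contra hcon
    push Not at hcon
    obtain ⟨u, hu⟩ := hgn s hs
    exact hu ((hmax u).trans hcon)
  have hpos : 0 < ‖g t0‖ := (norm_nonneg _).trans_lt hlt
  have hne0 : g t0 ≠ 0 := norm_pos_iff.1 hpos
  obtain ⟨N, hN⟩ := exists_pow_lt_of_lt_one hε ((div_lt_one hpos).2 hlt)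
  refine ⟨((g t0)⁻¹ • g) ^ N, A.pow_mem (A.smul_mem hg _) N, fun t => ?_, ⟨t0, ht0, ?_⟩, ?_⟩
  · simp only [ContinuousMap.pow_apply, ContinuousMap.smul_apply, smul_eq_mul, norm_pow, norm_mul,
      norm_inv]
    refine pow_le_one₀ (by positivity) ?_
    rw [inv_mul_le_iff₀ hpos, mul_one]
    exact hmax t
  · simp [hne0]
  · intro t ht htV
    simp only [ContinuousMap.pow_apply, ContinuousMap.smul_apply, smul_eq_mul, norm_pow, norm_mul,
      norm_inv]
    refine le_trans ?_ hN.le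
    refine pow_le_pow_left₀ (by positivity) ?_ N
    rw [inv_mul_eq_div]
    gcongr
    exact hsmax (show t ∈ E \ V from ⟨ht, htV⟩)

theorem exists_stack {K : Type*} [TopologicalSpace K] [CompactSpace K]
    (A : Subalgebra ℂ C(K, ℂ)) (E : Set K) (hEc : IsClosed E) (hE : IsBdryFor A E)
    (hmin : ∀ F : Set K, F ⊆ E → IsClosed F → IsBdryFor A F → E ⊆ F)
    (V : Set K) (hV : IsOpen V) (hVE : (V ∩ E).Nonempty) (δ : ℝ) (hδ : 0 < δ) (hδ1 : δ < 1)
    (k : ℕ) :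
    ∃ Φ ∈ A, ∃ V' ⊆ V, IsOpen V' ∧ (V' ∩ E).Nonempty ∧
      (∀ t, ‖Φ t‖ ≤ k) ∧ (∀ t ∈ E, ‖(k : ℂ) - Φ t‖ ≤ k + 1 + k * δ) ∧
      (∀ t ∈ E, t ∉ V → ‖Φ t‖ ≤ k * δ) ∧ (∀ t ∈ E, t ∈ V' → ‖(k : ℂ) - Φ t‖ ≤ k * δ) := by
  induction k with
  | zero => exact ⟨0, A.zero_mem, V, subset_rfl, hV, hVE, by simp, by simp, by simp, by simp⟩
  | succ k ih =>
    obtain ⟨Φ, hΦ, V', hV'V, hV', hne, h1, h2, h3, h4⟩ := ih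
    obtain ⟨g, hg, g1, ⟨t0, ht0E, ht0⟩, g3⟩ := exists_peak A E hEc hE hmin V' hV' hne δ hδ
    have key : ∀ t, (((k + 1 : ℕ) : ℂ)) - (Φ + g) t = ((k : ℂ) - Φ t) + (1 - g t) := by
      intro t; push_cast; change _ - (Φ t + g t) = _; ring
    refine ⟨Φ + g, A.add_mem hΦ hg, V' ∩ {t | ‖1 - g t‖ < δ}, inter_subset_left.trans hV'V,
      hV'.inter (isOpen_lt (by fun_prop) continuous_const), ⟨t0, ⟨?_, ?_⟩, ht0E⟩, ?_, ?_, ?_, ?_⟩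
    · by_contra hcon
      have := g3 t0 ht0E hcon
      rw [ht0, norm_one] at this
      linarith
    · simp [ht0, hδ]
    · intro t
      push_cast
      exact (norm_add_le _ _).trans (add_le_add (h1 t) (g1 t))
    · intro t ht
      rw [key]
      push_cast
      have hk : (0 : ℝ) ≤ k := k.cast_nonneg
      by_cases htV : t ∈ V'
      · have a := norm_add_le ((k : ℂ) - Φ t) (1 - g t)
        have b := norm_sub_le (1 : ℂ) (g t)
        rw [norm_one] at b
        have := h4 t ht htV
        have := g1 t
        nlinarith
      · have a := norm_add_le ((k : ℂ) - Φ t) (1 - g t)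
        have b := norm_sub_le (1 : ℂ) (g t)
        rw [norm_one] at b
        have := h2 t ht
        have := g3 t ht htV
        nlinarith
    · intro t ht htV
      have := norm_add_le (Φ t) (g t)
      have := h3 t ht htV
      have := g3 t ht (fun h => htV (hV'V h))
      push_cast
      change ‖Φ t + g t‖ ≤ _
      linarith
    · intro t ht htV
      rw [key]
      push_cast
      have := norm_add_le ((k : ℂ) - Φ t) (1 - g t)
      have := h4 t ht htV.1
      have : ‖1 - g t‖ < δ := htV.2
      linarith

theorem exists_pair {K : Type*} [TopologicalSpace K] [CompactSpace K]
    (A : Subalgebra ℂ C(K, ℂ)) (E : Set K) (hEc : IsClosed E) (hE : IsBdryFor A E)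
    (hmin : ∀ F : Set K, F ⊆ E → IsClosed F → IsBdryFor A F → E ⊆ F)
    (V : Set K) (hV : IsOpen V) (hVE : (V ∩ E).Nonempty) (ε : ℝ) (hε : 0 < ε) (hε1 : ε < 1) :
    ∃ φ ∈ A, ∃ g ∈ A, (∀ t, ‖φ t‖ ≤ 1) ∧ (∀ t ∈ E, ‖1 - φ t‖ ≤ 1 + ε) ∧
      (∀ t ∈ E, t ∉ V → ‖φ t‖ ≤ ε) ∧ (∀ t, ‖g t‖ ≤ 1) ∧ (∀ t ∈ E, t ∉ V → ‖g t‖ ≤ ε) ∧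
      (∃ t, g t = 1) ∧ (∀ t ∈ E, ‖g t‖ ≤ ε ∨ ‖1 - φ t‖ ≤ ε) := by
  obtain ⟨k, hk⟩ := exists_nat_gt (2 / ε)
  have hk0 : (0 : ℝ) < k := lt_trans (by positivity) hk
  have hkC : (k : ℂ) ≠ 0 := by
    have : (k : ℝ) ≠ 0 := hk0.ne'
    exact_mod_cast this
  rw [div_lt_iff₀ hε] at hk
  obtain ⟨Φ, hΦ, V', hV'V, hV', hne, h1, h2, h3, h4⟩ :=
    exists_stack A E hEc hE hmin V hV hVE (ε / 2) (by linarith) (by linarith) k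
  obtain ⟨g, hg, g1, ⟨t0, ht0E, ht0⟩, g3⟩ := exists_peak A E hEc hE hmin V' hV' hne ε hε
  have e1 : ∀ t, ‖((k : ℂ)⁻¹ • Φ) t‖ = ‖Φ t‖ / k := by
    intro t
    simp [div_eq_inv_mul]
  have e2 : ∀ t, ‖1 - ((k : ℂ)⁻¹ • Φ) t‖ = ‖(k : ℂ) - Φ t‖ / k := by
    intro t
    have : 1 - ((k : ℂ)⁻¹ • Φ) t = (k : ℂ)⁻¹ * ((k : ℂ) - Φ t) := by
      simp only [ContinuousMap.smul_apply, smul_eq_mul]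
      field_simp
    rw [this]
    simp [div_eq_inv_mul]
  refine ⟨(k : ℂ)⁻¹ • Φ, A.smul_mem hΦ _, g, hg, ?_, ?_, ?_, g1, ?_, ⟨t0, ht0⟩, ?_⟩
  · intro t
    rw [e1, div_le_one hk0]
    exact h1 t
  · intro t ht
    rw [e2, div_le_iff₀ hk0]
    have := h2 t ht
    nlinarith
  · intro t ht htV
    rw [e1, div_le_iff₀ hk0]
    have := h3 t ht htV
    nlinarith
  · intro t ht htV
    exact g3 t ht (fun h => htV (hV'V h))
  · intro t ht
    by_cases htV : t ∈ V'
    · right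
      rw [e2, div_le_iff₀ hk0]
      have := h4 t ht htV
      nlinarith
    · left
      exact g3 t ht htV

theorem norm_le_of_bdry {K : Type*} [TopologicalSpace K]
    {X : Type*} [NormedAddCommGroup X] [NormedSpace ℂ X]
    (S : Submodule ℂ (lp (fun _ : K => X) ∞))
    (hSweak : ∀ f ∈ S, Continuous (fun t : K => toWeakSpace ℂ X (f t)))
    (A : Subalgebra ℂ C(K, ℂ))
    (hAbase : (A : Set C(K, ℂ)) =
      {g : C(K, ℂ) | ∃ f ∈ S, ∃ φ : X →L[ℂ] ℂ, ∀ t : K, g t = φ (f t)})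
    (E : Set K) (hE : IsBdryFor A E) (f : S) (C : ℝ) (hC : 0 ≤ C)
    (h : ∀ t ∈ E, ‖f.1 t‖ ≤ C) : ‖f‖ ≤ C := by
  change ‖f.1‖ ≤ C
  refine lp.norm_le_of_forall_le hC fun t => ?_
  obtain ⟨φ, hφ1, hφ⟩ := exists_dual_vector'' ℂ (f.1 t)
  have hcont : Continuous (fun t => φ (f.1 t)) :=
    (WeakBilin.eval_continuous (topDualPairing ℂ X).flip φ).comp (hSweak f.1 f.2)
  have hmem : (⟨_, hcont⟩ : C(K, ℂ)) ∈ (A : Set C(K, ℂ)) := by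
    rw [hAbase]
    exact ⟨f.1, f.2, φ, fun t => rfl⟩
  obtain ⟨s, hs, hmax⟩ := hE _ hmem
  have h1 : ‖φ (f.1 t)‖ ≤ ‖φ (f.1 s)‖ := hmax t
  have h2 : ‖φ (f.1 s)‖ ≤ ‖f.1 s‖ := φ.le_of_opNorm_le_of_le hφ1 le_rfl |>.trans (by simp)
  rw [hφ] at h1
  simp only [Complex.coe_algebraMap, Complex.norm_real, norm_norm] at h1
  exact h1.trans (h2.trans (h s hs))

theorem weak_null {K : Type*} [TopologicalSpace K]
    {X : Type*} [NormedAddCommGroup X] [NormedSpace ℂ X]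
    (S : Submodule ℂ (lp (fun _ : K => X) ∞))
    (E : Set K) (hnorm : ∀ (f : S) (C : ℝ), 0 ≤ C → (∀ t ∈ E, ‖f.1 t‖ ≤ C) → ‖f‖ ≤ C)
    (U : ℕ → Set K) (hU : ∀ t ∈ E, ∀ m n, t ∈ U m → t ∈ U n → m = n)
    (u : ℕ → S) (C : ℝ) (hC : 0 ≤ C) (h1 : ∀ n, ∀ t ∈ E, ‖(u n).1 t‖ ≤ C)
    (h2 : ∀ n, ∀ t ∈ E, t ∉ U n → ‖(u n).1 t‖ ≤ C * (1 / 2) ^ (n + 1)) :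
    Tendsto (fun n => toWeakSpace ℂ S (u n)) atTop (𝓝 0) := by
  classical
  have main : ∀ x : S →L[ℂ] ℂ, Tendsto (fun n => x (u n)) atTop (𝓝 0) := by
    intro x
    rw [tendsto_zero_iff_norm_tendsto_zero]
    refine (summable_of_sum_le (c := ‖x‖ * (2 * C)) (fun n => norm_nonneg _) fun F => ?_).tendsto_atTop_zero
    have hc : ∀ n, ∃ c : ℂ, ‖c‖ = 1 ∧ c * x (u n) = ‖x (u n)‖ := by
      intro n
      by_cases h0 : x (u n) = 0
      · exact ⟨1, by simp, by simp [h0]⟩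
      · refine ⟨‖x (u n)‖ / x (u n), ?_, by field_simp⟩
        simp [h0]
    choose c hc1 hc2 using hc
    have hsum : x (∑ n ∈ F, c n • u n) = ((∑ n ∈ F, ‖x (u n)‖ : ℝ) : ℂ) := by
      rw [map_sum]
      push_cast
      refine Finset.sum_congr rfl fun n _ => ?_
      rw [map_smul, smul_eq_mul, hc2]
    have hnn : (0 : ℝ) ≤ ∑ n ∈ F, ‖x (u n)‖ := Finset.sum_nonneg fun _ _ => norm_nonneg _
    have hle : ∑ n ∈ F, ‖x (u n)‖ = ‖x (∑ n ∈ F, c n • u n)‖ := by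
      rw [hsum, Complex.norm_real, Real.norm_of_nonneg hnn]
    rw [hle]
    refine (x.le_opNorm _).trans (mul_le_mul_of_nonneg_left ?_ x.opNorm_nonneg)
    refine hnorm _ _ (by positivity) fun t ht => ?_
    have hev : (∑ n ∈ F, c n • u n).1 t = ∑ n ∈ F, c n • (u n).1 t := by
      let L : S →ₗ[ℂ] X :=
        { toFun := fun v => v.1 t
          map_add' := fun _ _ => rfl
          map_smul' := fun _ _ => rfl }
      change L (∑ n ∈ F, c n • u n) = ∑ n ∈ F, c n • L (u n)
      simp only [map_sum, map_smul]
    rw [hev]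
    have hb : ∀ n, ‖c n • (u n).1 t‖ ≤ C * (1 / 2) ^ (n + 1) + if t ∈ U n then C else 0 := by
      intro n
      rw [norm_smul, hc1, one_mul]
      split_ifs with h
      · have := h1 n t ht
        have : 0 ≤ C * (1 / 2) ^ (n + 1) := by positivity
        linarith
      · simpa using h2 n t ht h
    refine (norm_sum_le _ _).trans ((Finset.sum_le_sum fun n _ => hb n).trans ?_)
    rw [Finset.sum_add_distrib]
    have hA : ∑ n ∈ F, C * (1 / 2 : ℝ) ^ (n + 1) ≤ C := by
      have hs : HasSum (fun n : ℕ => C * (1 / 2 : ℝ) ^ (n + 1)) C := by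
        have := (hasSum_geometric_two.mul_left (C / 2))
        have e1 : (fun n : ℕ => C * (1 / 2 : ℝ) ^ (n + 1)) = fun n : ℕ => C / 2 * (1 / 2) ^ n := by
          ext n; rw [pow_succ]; ring
        have e2 : C / 2 * 2 = C := by ring
        rw [e1]
        rwa [e2] at this
      exact sum_le_hasSum F (fun n _ => by positivity) hs
    have hB : ∑ n ∈ F, (if t ∈ U n then C else 0) ≤ C := by
      by_cases hex : ∃ m, t ∈ U m
      · obtain ⟨m, hm⟩ := hex
        calc ∑ n ∈ F, (if t ∈ U n then C else 0) ≤ ∑ n ∈ F, (if n = m then C else 0) := by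
              refine Finset.sum_le_sum fun n _ => ?_
              by_cases h : t ∈ U n
              · rw [if_pos h, if_pos (hU t ht n m h hm)]
              · simp only [h, if_false]
                split_ifs <;> simp [hC]
          _ ≤ C := by
              rw [Finset.sum_ite_eq']
              split_ifs <;> simp [hC]
      · push Not at hex
        simp [hex, hC]
    linarith
  have : (𝓝 (0 : WeakSpace ℂ S)) =
      comap (fun x : WeakSpace ℂ S => fun y : S →L[ℂ] ℂ => (topDualPairing ℂ S).flip x y)
        (𝓝 (fun y => (topDualPairing ℂ S).flip (0 : S) y)) := nhds_induced _ _
  rw [this, tendsto_comap_iff, tendsto_pi_nhds]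
  intro y
  change Tendsto (fun n => y (u n)) atTop (𝓝 (y 0))
  rw [map_zero]
  exact main y

end helpers

/- STATEMENT 8: Let `S` be a closed subspace of the Banach space `C(K,(X,w))` of
weakly continuous functions from the compact Hausdorff space `K` into the complex
Banach space `X` with the supremum norm (realized here as a closed subspace of the
sup-normed space of bounded functions `K → X` all of whose members are weakly
continuous), such that the base algebra `A = {x* ∘ f : f ∈ S, x* ∈ X*}` is a uniform
algebra on `K` and `φ·f ∈ S` for all `φ ∈ A`, `f ∈ S`. If `A` is infinite-dimensional,
then `S` has the diameter two property. -/
theorem stmt_8 {K : Type*} [TopologicalSpace K] [CompactSpace K] [T2Space K]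
    {X : Type*} [NormedAddCommGroup X] [NormedSpace ℂ X] [CompleteSpace X] [Nontrivial X]
    (S : Submodule ℂ (lp (fun _ : K => X) ∞))
    (hSweak : ∀ f ∈ S, Continuous (fun t : K => toWeakSpace ℂ X (f t)))
    (hSclosed : IsClosed (S : Set (lp (fun _ : K => X) ∞)))
    (A : Subalgebra ℂ C(K, ℂ))
    (hAbase : (A : Set C(K, ℂ)) =
      {g : C(K, ℂ) | ∃ f ∈ S, ∃ φ : X →L[ℂ] ℂ, ∀ t : K, g t = φ (f t)})
    (hAclosed : IsClosed (A : Set C(K, ℂ)))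
    (hAsep : ∀ s t : K, s ≠ t → ∃ f ∈ A, f s ≠ f t)
    (hmul : ∀ φ ∈ A, ∀ f ∈ S, ∃ h ∈ S, ∀ t : K, h t = φ t • f t)
    (hAinf : ¬ FiniteDimensional ℂ A) :
    ∀ W : Set (WeakSpace ℂ S), IsOpen W →
      ((⇑(toWeakSpace ℂ S) ⁻¹' W) ∩ Metric.closedBall (0 : S) 1).Nonempty →
      Metric.diam ((⇑(toWeakSpace ℂ S) ⁻¹' W) ∩ Metric.closedBall (0 : S) 1) = 2 := by
  intro W hW hne
  have hKne : Nonempty K := by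
    by_contra hemp
    rw [not_nonempty_iff] at hemp
    apply hAinf
    have : Subsingleton A := ⟨fun a b => Subtype.ext (ContinuousMap.ext fun t => hemp.elim t)⟩
    infer_instance
  obtain ⟨E, hEc, hE, hmin⟩ := exists_min_bdry A
  have hEinf := bdry_infinite A hAinf E hE
  have hnorm := norm_le_of_bdry S hSweak A hAbase E hE
  have hle : ∀ (f : S) (t : K), ‖f.1 t‖ ≤ ‖f‖ := fun f t =>
    lp.norm_apply_le_norm ENNReal.top_ne_zero f.1 t
  -- disjoint open sets meeting `E`
  have hEi : Infinite E := hEinf.to_subtype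
  obtain ⟨U', hU'inf, hU'o, hU'd⟩ := exists_seq_infinite_isOpen_pairwise_disjoint E
  choose U hUo hUpre using fun n => isOpen_induced_iff.1 (hU'o n)
  have hUE : ∀ n, (U n ∩ E).Nonempty := by
    intro n
    obtain ⟨t, ht⟩ := (hU'inf n).nonempty
    rw [← hUpre n] at ht
    exact ⟨t.1, ht, t.2⟩
  have hUd : ∀ t ∈ E, ∀ m n, t ∈ U m → t ∈ U n → m = n := by
    intro t ht m n hm hn
    by_contra hmn
    have hm' : (⟨t, ht⟩ : E) ∈ U' m := by rw [← hUpre m]; exact hm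
    have hn' : (⟨t, ht⟩ : E) ∈ U' n := by rw [← hUpre n]; exact hn
    exact Set.disjoint_left.1 (hU'd hmn) hm' hn'
  -- the peaking functions
  have hε0 : ∀ n : ℕ, (0 : ℝ) < (1 / 2) ^ (n + 1) := fun n => by positivity
  have hε1 : ∀ n : ℕ, ((1 : ℝ) / 2) ^ (n + 1) < 1 := fun n =>
    pow_lt_one₀ (by norm_num) (by norm_num) (by omega)
  choose φ hφA g hgA hφ1 hφ2 hφ3 hg1 hg2 hg3 hφg using fun n =>
    exists_pair A E hEc hE hmin (U n) (hUo n) (hUE n) _ (hε0 n) (hε1 n)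
  -- a nowhere small element of `S`
  obtain ⟨f0, hf0, x0, hx0⟩ : ∃ f ∈ S, ∃ φ : X →L[ℂ] ℂ, ∀ t : K, (1 : C(K, ℂ)) t = φ (f t) := by
    have h1 : (1 : C(K, ℂ)) ∈ (A : Set C(K, ℂ)) := A.one_mem
    rw [hAbase] at h1
    exact h1
  have hx1 : ∀ t, 1 ≤ ‖x0‖ * ‖f0 t‖ := by
    intro t
    have h1 := x0.le_opNorm (f0 t)
    rw [← hx0 t] at h1
    simpa using h1
  have hx0pos : 0 < ‖x0‖ := by
    rcases (x0.opNorm_nonneg).lt_or_eq with h | h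
    · exact h
    · have := hx1 hKne.some
      rw [← h] at this
      norm_num at this
  set M : ℝ := ‖x0‖ * ‖f0‖ with hM
  have hM0 : 0 ≤ M := mul_nonneg hx0pos.le (norm_nonneg _)
  -- the functions `g n • f0`
  choose h hhS hh using fun n => hmul (g n) (hgA n) f0 hf0
  have hhn : ∀ n, 1 ≤ ‖x0‖ * ‖h n‖ := by
    intro n
    obtain ⟨t, ht⟩ := hg3 n
    have h1 := hle ⟨h n, hhS n⟩ t
    simp only [hh, ht, one_smul] at h1
    exact (hx1 t).trans (mul_le_mul_of_nonneg_left h1 hx0pos.le)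
  have hhpos : ∀ n, 0 < ‖h n‖ := by
    intro n
    rcases (norm_nonneg (h n)).lt_or_eq with h' | h'
    · exact h'
    · have := hhn n
      rw [← h'] at this
      norm_num at this
  let H : ℕ → S := fun n => ((‖h n‖ : ℂ))⁻¹ • ⟨h n, hhS n⟩
  have hHnorm : ∀ n, ‖H n‖ = 1 := by
    intro n
    have : ‖(⟨h n, hhS n⟩ : S)‖ = ‖h n‖ := rfl
    simp only [H]
    rw [norm_smul, this, norm_inv, Complex.norm_real, norm_norm]
    exact inv_mul_cancel₀ (hhpos n).ne'
  have hHle : ∀ n t, ‖(H n).1 t‖ ≤ M * ‖g n t‖ := by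
    intro n t
    have e : (H n).1 t = ((‖h n‖ : ℂ))⁻¹ • (g n t • f0 t) := by
      rw [← hh]; rfl
    rw [e, norm_smul, norm_smul, norm_inv, Complex.norm_real, norm_norm, inv_mul_le_iff₀ (hhpos n)]
    have h1 : ‖f0 t‖ ≤ ‖f0‖ := hle ⟨f0, hf0⟩ t
    have h2 := hhn n
    calc ‖g n t‖ * ‖f0 t‖ ≤ ‖g n t‖ * ‖f0‖ := by gcongr
      _ = 1 * (‖g n t‖ * ‖f0‖) := by ring
      _ ≤ (‖x0‖ * ‖h n‖) * (‖g n t‖ * ‖f0‖) := by gcongr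
      _ = ‖h n‖ * (M * ‖g n t‖) := by rw [hM]; ring
  -- the given point
  obtain ⟨f, hfW, hfB⟩ := hne
  have hf1 : ‖f‖ ≤ 1 := by simpa using hfB
  choose q hqS hq using fun n => hmul (φ n) (hφA n) f.1 f.2
  let Q : ℕ → S := fun n => ⟨q n, hqS n⟩
  have hQ : ∀ n t, (Q n).1 t = φ n t • f.1 t := fun n t => hq n t
  have hQw : Filter.Tendsto (fun n => toWeakSpace ℂ S (Q n)) Filter.atTop (nhds 0) := by
    refine weak_null S E hnorm U hUd Q 1 zero_le_one ?_ ?_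
    · intro n t ht
      rw [hQ, norm_smul]
      exact mul_le_one₀ (hφ1 n t) (norm_nonneg _) ((hle f t).trans hf1)
    · intro n t ht htU
      rw [hQ, norm_smul, one_mul]
      calc _ ≤ (1 / 2 : ℝ) ^ (n + 1) * 1 :=
            mul_le_mul (hφ3 n t ht htU) ((hle f t).trans hf1) (norm_nonneg _) (hε0 n).le
        _ = _ := mul_one _
  have hHw : Filter.Tendsto (fun n => toWeakSpace ℂ S (H n)) Filter.atTop (nhds 0) := by
    refine weak_null S E hnorm U hUd H M hM0 ?_ ?_
    · intro n t ht
      exact (hHle n t).trans (mul_le_of_le_one_right hM0 (hg1 n t))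
    · intro n t ht htU
      exact (hHle n t).trans (mul_le_mul_of_nonneg_left (hg2 n t ht htU) hM0)
  -- scaling factors
  let η : ℕ → ℝ := fun n => (1 / 2) ^ (n + 1) * (1 + M)
  have hη0 : ∀ n, 0 ≤ η n := fun n => mul_nonneg (hε0 n).le (by linarith)
  have hηlim : Filter.Tendsto η Filter.atTop (nhds 0) := by
    have h1 : Filter.Tendsto (fun n : ℕ => (1 / 2 : ℝ) ^ (n + 1)) Filter.atTop (nhds 0) :=
      (Filter.tendsto_add_atTop_iff_nat 1).2
        (tendsto_pow_atTop_nhds_zero_of_lt_one (by norm_num) (by norm_num))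
    simpa [η] using h1.mul_const (1 + M)
  let r : ℕ → ℝ := fun n => (1 + η n)⁻¹
  have hr0 : ∀ n, 0 < r n := fun n => inv_pos.2 (by linarith [hη0 n])
  have hrlim : Filter.Tendsto r Filter.atTop (nhds 1) := by
    have : Filter.Tendsto (fun n => 1 + η n) Filter.atTop (nhds (1 + 0)) := tendsto_const_nhds.add hηlim
    simpa [r] using this.inv₀ (by norm_num)
  have hrC : Filter.Tendsto (fun n => (r n : ℂ)) Filter.atTop (nhds 1) := by
    have := (Complex.continuous_ofReal.tendsto 1).comp hrlim
    simpa [Function.comp_def] using this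
  -- pointwise estimate
  have hpt : ∀ n, ∀ c : ℂ, ‖c‖ = 1 → ‖(r n : ℂ) • (f - Q n + c • H n)‖ ≤ 1 := by
    intro n c hc
    have hb : ‖f - Q n + c • H n‖ ≤ 1 + η n := by
      refine hnorm _ _ (by linarith [hη0 n]) fun t ht => ?_
      have e : (f - Q n + c • H n).1 t = (1 - φ n t) • f.1 t + c • (H n).1 t := by
        have : (f - Q n + c • H n).1 t = f.1 t - (Q n).1 t + c • (H n).1 t := rfl
        rw [this, hQ, sub_smul, one_smul]
      rw [e]
      have a1 : ‖(1 - φ n t) • f.1 t‖ ≤ ‖1 - φ n t‖ := by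
        rw [norm_smul]
        exact mul_le_of_le_one_right (norm_nonneg _) ((hle f t).trans hf1)
      have a2 : ‖c • (H n).1 t‖ = ‖(H n).1 t‖ := by rw [norm_smul, hc, one_mul]
      have a3 := norm_add_le ((1 - φ n t) • f.1 t) (c • (H n).1 t)
      have a4 := hHle n t
      have a5 := hle (H n) t
      rw [hHnorm] at a5
      have a6 := hε0 n
      have e3 : η n = (1 / 2) ^ (n + 1) + M * (1 / 2) ^ (n + 1) := by simp only [η]; ring
      have a7 : 0 ≤ M * (1 / 2 : ℝ) ^ (n + 1) := by positivity
      rcases hφg n t ht with h1 | h1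
      · have h2 := hφ2 n t ht
        have h3 := mul_le_mul_of_nonneg_left h1 hM0
        linarith
      · linarith
    rw [norm_smul, Complex.norm_real, Real.norm_of_nonneg (hr0 n).le]
    calc r n * _ ≤ r n * (1 + η n) := mul_le_mul_of_nonneg_left hb (hr0 n).le
      _ = 1 := inv_mul_cancel₀ (by linarith [hη0 n])
  have hev : ∀ c : ℂ, ‖c‖ = 1 →
      ∀ᶠ n in Filter.atTop, (r n : ℂ) • (f - Q n + c • H n) ∈
        ((⇑(toWeakSpace ℂ S) ⁻¹' W) ∩ Metric.closedBall (0 : S) 1) := by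
    intro c hc
    have hlim : Filter.Tendsto (fun n => toWeakSpace ℂ S ((r n : ℂ) • (f - Q n + c • H n))) Filter.atTop
        (nhds (toWeakSpace ℂ S f)) := by
      have := hrC.smul (((tendsto_const_nhds (x := toWeakSpace ℂ S f)).sub hQw).add
        (hHw.const_smul c))
      simpa only [map_smul, map_add, map_sub, smul_zero, sub_zero, add_zero, one_smul] using this
    filter_upwards [hlim.eventually (hW.mem_nhds hfW)] with n hn
    exact ⟨hn, by simpa using hpt n c hc⟩
  have hbdd : Bornology.IsBounded
      ((⇑(toWeakSpace ℂ S) ⁻¹' W) ∩ Metric.closedBall (0 : S) 1) :=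
    Metric.isBounded_closedBall.subset Set.inter_subset_right
  apply le_antisymm
  · calc _ ≤ Metric.diam (Metric.closedBall (0 : S) 1) :=
          Metric.diam_mono Set.inter_subset_right Metric.isBounded_closedBall
      _ ≤ 2 * 1 := Metric.diam_closedBall zero_le_one
      _ = 2 := by norm_num
  · have hlim : Filter.Tendsto (fun n => 2 * r n) Filter.atTop (nhds 2) := by
      simpa using hrlim.const_mul 2
    refine le_of_tendsto hlim ?_
    filter_upwards [hev 1 (by simp), hev (-1) (by simp)] with n h1 h2
    refine le_trans (le_of_eq ?_) (Metric.dist_le_diam_of_mem hbdd h1 h2)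
    have e : (r n : ℂ) • (f - Q n + (1 : ℂ) • H n) - (r n : ℂ) • (f - Q n + (-1 : ℂ) • H n)
        = ((2 * r n : ℝ) : ℂ) • H n := by
      push_cast
      module
    rw [dist_eq_norm, e, norm_smul, hHnorm, Complex.norm_real, mul_one,
      Real.norm_of_nonneg (by linarith [hr0 n])]
end

section
/- Let Ω be a Hausdorff space, X a complex Banach space, and S a closed subspace of the Banach space C_b(Ω,X) of bounded continuous X-valued functions with the supremum norm, such that A := {x* ∘ g : g ∈ S, x* ∈ X*} is a function algebra on Ω. Let M_A be the set of nonzero multiplicative linear functionals (characters) on A. For g ∈ S and φ ∈ M_A, define ĝ(φ) : X* → ℂ by ĝ(φ)(x*) = φ(x* ∘ g). Then ĝ(φ) is a bounded linear functional on X* (i.e., ĝ(φ) ∈ X**) for every φ ∈ M_A, and sup_{φ∈M_A} ‖ĝ(φ)‖_{X**} = ‖g‖ = sup_{t∈Ω} ‖g(t)‖_X; that is, the map g ↦ ĝ is an isometry. -/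
open BoundedContinuousFunction

set_option maxHeartbeats 1000000
set_option synthInstance.maxHeartbeats 1000000

/- STATEMENT 9: Let `Ω` be a Hausdorff space, `X` a complex Banach space, and `S` a
closed subspace of `C_b(Ω,X)` such that `A = {x* ∘ g : g ∈ S, x* ∈ X*}` is a function
algebra on `Ω`. For `g ∈ S` and a character `φ` of `A`, define `ĝ(φ)(x*) = φ(x* ∘ g)`.
Then `ĝ(φ)` is a bounded linear functional on `X*` (an element `G φ` of `X**`) for
every character `φ`, and `sup_φ ‖ĝ(φ)‖ = ‖g‖`, i.e. `g ↦ ĝ` is an isometry. -/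
theorem stmt_9 {Ω : Type*} [TopologicalSpace Ω] [T2Space Ω]
    {X : Type*} [NormedAddCommGroup X] [NormedSpace ℂ X] [CompleteSpace X]
    (S : Submodule ℂ (Ω →ᵇ X)) (hSclosed : IsClosed (S : Set (Ω →ᵇ X)))
    (A : Subalgebra ℂ (Ω →ᵇ ℂ))
    (hAbase : (A : Set (Ω →ᵇ ℂ)) =
      {h : Ω →ᵇ ℂ | ∃ g ∈ S, ∃ φ : X →L[ℂ] ℂ, ∀ t : Ω, h t = φ (g t)})
    (hAclosed : IsClosed (A : Set (Ω →ᵇ ℂ)))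
    (hAsep : ∀ s t : Ω, s ≠ t → ∃ h ∈ A, h s ≠ h t) :
    ∀ g ∈ S, ∃ G : WeakDual.characterSpace ℂ A → ((X →L[ℂ] ℂ) →L[ℂ] ℂ),
      (∀ (φ : WeakDual.characterSpace ℂ A) (ψ : A) (x' : X →L[ℂ] ℂ),
        (∀ t : Ω, (ψ : Ω →ᵇ ℂ) t = x' (g t)) → G φ x' = φ ψ) ∧
      (⨆ φ : WeakDual.characterSpace ℂ A, ‖G φ‖) = ‖g‖ := by
  intro g hg
  have : CompleteSpace A := hAclosed.completeSpace_coe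
  have hone : ‖(1 : A)‖ ≤ 1 := by
    change ‖(1 : Ω →ᵇ ℂ)‖ ≤ 1
    rw [BoundedContinuousFunction.norm_le zero_le_one]
    intro t
    simp
  have hmem : ∀ x' : X →L[ℂ] ℂ, x'.compLeftContinuousBounded Ω g ∈ A := by
    intro x'
    have : x'.compLeftContinuousBounded Ω g ∈ (A : Set (Ω →ᵇ ℂ)) := by
      rw [hAbase]
      exact ⟨g, hg, x', fun t => rfl⟩
    exact this
  let T : (X →L[ℂ] ℂ) →ₗ[ℂ] A :=
    { toFun := fun x' => ⟨x'.compLeftContinuousBounded Ω g, hmem x'⟩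
      map_add' := fun x y => by
        apply Subtype.ext
        ext t
        rfl
      map_smul' := fun c x => by
        apply Subtype.ext
        ext t
        rfl }
  have hT : ∀ x' t, (T x' : Ω →ᵇ ℂ) t = x' (g t) := fun x' t => rfl
  have hTn : ∀ x', ‖T x'‖ ≤ ‖g‖ * ‖x'‖ := by
    intro x'
    change ‖(T x' : Ω →ᵇ ℂ)‖ ≤ _
    rw [BoundedContinuousFunction.norm_le (by positivity)]
    intro t
    rw [hT, mul_comm]
    exact (x'.le_opNorm _).trans (by gcongr; exact g.norm_coe_le_norm t)
  have hφ : ∀ (φ : WeakDual.characterSpace ℂ A) (a : A), ‖φ a‖ ≤ ‖a‖ := by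
    intro φ a
    have h := AlgHom.norm_apply_le_self_mul_norm_one (WeakDual.CharacterSpace.toAlgHom φ) a
    exact h.trans (mul_le_of_le_one_right (norm_nonneg _) hone)
  let L : WeakDual.characterSpace ℂ A → ((X →L[ℂ] ℂ) →ₗ[ℂ] ℂ) := fun φ =>
    (WeakDual.CharacterSpace.toAlgHom φ).toLinearMap.comp T
  let G : WeakDual.characterSpace ℂ A → ((X →L[ℂ] ℂ) →L[ℂ] ℂ) := fun φ =>
    (L φ).mkContinuous ‖g‖ (fun x' => (hφ φ (T x')).trans (hTn x'))
  have hG : ∀ φ x', G φ x' = φ (T x') := fun φ x' => rfl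
  have hGn : ∀ φ, ‖G φ‖ ≤ ‖g‖ := fun φ =>
    LinearMap.mkContinuous_norm_le _ (norm_nonneg _) _
  refine ⟨G, ?_, ?_⟩
  · intro φ ψ x' h
    rw [hG]
    congr 1
    apply Subtype.ext
    ext t
    rw [hT, h]
  · apply le_antisymm
    · exact Real.iSup_le hGn (norm_nonneg _)
    · have hbdd : BddAbove (Set.range fun φ => ‖G φ‖) := by
        refine ⟨‖g‖, ?_⟩
        rintro _ ⟨φ, rfl⟩
        exact hGn φ
      have hnn : 0 ≤ ⨆ φ : WeakDual.characterSpace ℂ A, ‖G φ‖ :=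
        Real.iSup_nonneg fun φ => norm_nonneg (G φ)
      rw [BoundedContinuousFunction.norm_le hnn]
      intro t
      let e : A →ₐ[ℂ] ℂ :=
        { toFun := fun a => (a : Ω →ᵇ ℂ) t
          map_one' := rfl
          map_mul' := fun _ _ => rfl
          map_zero' := rfl
          map_add' := fun _ _ => rfl
          commutes' := fun _ => rfl }
      let φ : WeakDual.characterSpace ℂ A := WeakDual.CharacterSpace.equivAlgHom.symm e
      have hφt : ∀ a : A, φ a = (a : Ω →ᵇ ℂ) t := fun a => rfl
      refine le_trans ?_ (le_ciSup hbdd φ)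
      refine NormedSpace.norm_le_dual_bound ℂ (g t) (norm_nonneg (G φ)) ?_
      intro x'
      have h := (G φ).le_opNorm x'
      rw [hG, hφt, hT] at h
      exact h
end

section
/- Let X and Y be nontrivial complex Banach spaces and let C_b(B_X, Y) denote the Banach space of all bounded continuous Y-valued functions on the closed unit ball B_X of X, with the supremum norm. Then C_b(B_X, Y) has the diameter two property: every nonempty relatively weakly open subset of its closed unit ball has diameter two. -/
open BoundedContinuousFunction

set_option maxHeartbeats 1000000
set_option synthInstance.maxHeartbeats 1000000


/-- Bump functions with pairwise disjoint supports on the half line. -/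
noncomputable def bumpPsi (n : ℕ) (t : ℝ) : ℝ := max 0 (1 - 3 * |2 ^ n * t - 1|)

lemma bumpPsi_nonneg (n : ℕ) (t : ℝ) : 0 ≤ bumpPsi n t := le_max_left _ _

lemma bumpPsi_le_one (n : ℕ) (t : ℝ) : bumpPsi n t ≤ 1 :=
  max_le zero_le_one (by linarith [abs_nonneg (2 ^ n * t - 1)])

lemma bumpPsi_continuous (n : ℕ) : Continuous (bumpPsi n) := by
  unfold bumpPsi; fun_prop

lemma bumpPsi_ne {n : ℕ} {t : ℝ} (h : bumpPsi n t ≠ 0) :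
    2 / 3 < 2 ^ n * t ∧ 2 ^ n * t < 4 / 3 := by
  have h1 : |2 ^ n * t - 1| < 1 / 3 := by
    by_contra hc
    exact h (max_eq_left (by linarith))
  rw [abs_lt] at h1
  constructor <;> linarith [h1.1, h1.2]

lemma bumpPsi_disj_lt {n m : ℕ} (hnm : n < m) {t : ℝ} (h : bumpPsi n t ≠ 0) :
    bumpPsi m t = 0 := by
  by_contra hm
  have h1 := (bumpPsi_ne h).1
  have h2 := (bumpPsi_ne hm).2
  have ht : 0 < t := by
    by_contra hc
    have : (2 : ℝ) ^ n * t ≤ 0 := mul_nonpos_of_nonneg_of_nonpos (by positivity) (by linarith)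
    linarith
  have h3 : (2 : ℝ) ^ (n + 1) ≤ 2 ^ m := pow_le_pow_right₀ (by norm_num) hnm
  have h4 := mul_le_mul_of_nonneg_right h3 ht.le
  rw [pow_succ] at h4
  linarith

lemma bumpPsi_disj {n m : ℕ} (hnm : n ≠ m) {t : ℝ} (h : bumpPsi n t ≠ 0) :
    bumpPsi m t = 0 := by
  rcases lt_or_gt_of_ne hnm with h' | h'
  · exact bumpPsi_disj_lt h' h
  · by_contra hm
    exact h (bumpPsi_disj_lt h' hm)

section
variable {X Y : Type*} [NormedAddCommGroup X] [NormedAddCommGroup Y] [NormedSpace ℂ Y]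

/-- The function `p` localized by the `n`-th bump. -/
noncomputable def bumpMul (p : ↥(Metric.closedBall (0 : X) 1) →ᵇ Y) (n : ℕ) :
    ↥(Metric.closedBall (0 : X) 1) →ᵇ Y :=
  BoundedContinuousFunction.ofNormedAddCommGroup
    (fun x => ((bumpPsi n ‖(x : X)‖ : ℝ) : ℂ) • p x)
    (((Complex.continuous_ofReal.comp ((bumpPsi_continuous n).comp
      (continuous_norm.comp continuous_subtype_val)))).smul p.continuous) ‖p‖ (by
    intro x
    rw [norm_smul, Complex.norm_real, Real.norm_of_nonneg (bumpPsi_nonneg _ _)]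
    calc _ ≤ 1 * ‖p‖ := mul_le_mul (bumpPsi_le_one _ _) (p.norm_coe_le_norm x)
          (norm_nonneg _) zero_le_one
      _ = _ := one_mul _)

lemma bumpMul_apply (p : ↥(Metric.closedBall (0 : X) 1) →ᵇ Y) (n : ℕ)
    (x : ↥(Metric.closedBall (0 : X) 1)) :
    bumpMul p n x = ((bumpPsi n ‖(x : X)‖ : ℝ) : ℂ) • p x := rfl

lemma bumpMul_apply_norm_le (p : ↥(Metric.closedBall (0 : X) 1) →ᵇ Y) (n : ℕ)
    (x : ↥(Metric.closedBall (0 : X) 1)) : ‖bumpMul p n x‖ ≤ ‖p‖ := by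
  rw [bumpMul_apply, norm_smul, Complex.norm_real, Real.norm_of_nonneg (bumpPsi_nonneg _ _)]
  calc _ ≤ 1 * ‖p‖ := mul_le_mul (bumpPsi_le_one _ _) (p.norm_coe_le_norm x)
        (norm_nonneg _) zero_le_one
    _ = _ := one_mul _

lemma bumpMul_sum_norm_le (p : ↥(Metric.closedBall (0 : X) 1) →ᵇ Y) (c : ℕ → ℂ)
    (hc : ∀ i, ‖c i‖ ≤ 1) (s : Finset ℕ) : ‖∑ i ∈ s, c i • bumpMul p i‖ ≤ ‖p‖ := by
  rw [BoundedContinuousFunction.norm_le (norm_nonneg _)]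
  intro x
  rw [BoundedContinuousFunction.sum_apply]
  by_cases h : ∃ i ∈ s, bumpPsi i ‖(x : X)‖ ≠ 0
  · obtain ⟨i, hi, hne⟩ := h
    rw [Finset.sum_eq_single_of_mem i hi]
    · rw [BoundedContinuousFunction.smul_apply, norm_smul]
      calc _ ≤ 1 * ‖p‖ := mul_le_mul (hc i) (bumpMul_apply_norm_le p i x)
            (norm_nonneg _) zero_le_one
        _ = _ := one_mul _
    · intro j _ hj
      rw [BoundedContinuousFunction.smul_apply, bumpMul_apply, bumpPsi_disj hj.symm hne]
      simp
  · push Not at h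
    rw [Finset.sum_eq_zero]
    · simp
    · intro j hj
      rw [BoundedContinuousFunction.smul_apply, bumpMul_apply, h j hj]
      simp

lemma bumpMul_weak_null (p : ↥(Metric.closedBall (0 : X) 1) →ᵇ Y)
    (L : (↥(Metric.closedBall (0 : X) 1) →ᵇ Y) →L[ℂ] ℂ) :
    Filter.Tendsto (fun n => L (bumpMul p n)) Filter.atTop (nhds 0) := by
  have hex : ∀ z : ℂ, ∃ c : ℂ, ‖c‖ ≤ 1 ∧ c * z = (‖z‖ : ℂ) := by
    intro z
    by_cases hz : z = 0
    · exact ⟨0, by simp, by simp [hz]⟩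
    · refine ⟨(‖z‖ : ℂ) / z, ?_, by field_simp⟩
      rw [norm_div, Complex.norm_real, norm_norm, div_self (norm_ne_zero_iff.2 hz)]
  choose c hc1 hc2 using hex
  have hs : Summable (fun n => ‖L (bumpMul p n)‖) := by
    refine summable_of_sum_le (c := ‖L‖ * ‖p‖) (fun _ => norm_nonneg _) ?_
    intro s
    have h1 : L (∑ i ∈ s, c (L (bumpMul p i)) • bumpMul p i)
        = ((∑ i ∈ s, ‖L (bumpMul p i)‖ : ℝ) : ℂ) := by
      rw [map_sum, Complex.ofReal_sum]
      refine Finset.sum_congr rfl fun i _ => ?_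
      rw [map_smul, smul_eq_mul, hc2]
    have h2 : ‖L (∑ i ∈ s, c (L (bumpMul p i)) • bumpMul p i)‖ ≤ ‖L‖ * ‖p‖ :=
      (L.le_opNorm _).trans (mul_le_mul_of_nonneg_left
        (bumpMul_sum_norm_le p _ (fun i => hc1 _) s) (norm_nonneg _))
    rw [h1, Complex.norm_real] at h2
    exact (le_abs_self _).trans h2
  exact tendsto_zero_iff_norm_tendsto_zero.2 hs.tendsto_atTop_zero

lemma bumpMul_eventually (f p : ↥(Metric.closedBall (0 : X) 1) →ᵇ Y)
    (W : Set (WeakSpace ℂ (↥(Metric.closedBall (0 : X) 1) →ᵇ Y))) (hW : IsOpen W)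
    (hf : toWeakSpace ℂ (↥(Metric.closedBall (0 : X) 1) →ᵇ Y) f ∈ W) :
    ∀ᶠ n in Filter.atTop,
      toWeakSpace ℂ (↥(Metric.closedBall (0 : X) 1) →ᵇ Y) (f + bumpMul p n) ∈ W := by
  have h : Filter.Tendsto
      (fun n => toWeakSpace ℂ (↥(Metric.closedBall (0 : X) 1) →ᵇ Y) (f + bumpMul p n))
      Filter.atTop (nhds (toWeakSpace ℂ (↥(Metric.closedBall (0 : X) 1) →ᵇ Y) f)) := by
    refine (WeakBilin.tendsto_iff_forall_eval_tendsto
      (topDualPairing ℂ (↥(Metric.closedBall (0 : X) 1) →ᵇ Y)).flip ?_).2 ?_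
    · intro a b hab
      by_contra hne
      obtain ⟨g, hg⟩ := SeparatingDual.exists_separating_of_ne (R := ℂ) hne
      exact hg (LinearMap.congr_fun hab g)
    · intro L
      have := (bumpMul_weak_null p L).const_add (L f)
      rw [add_zero] at this
      refine this.congr fun n => ?_
      exact (map_add L f (bumpMul p n)).symm
  exact h.eventually (hW.mem_nhds hf)

lemma bump_norm_le (f : ↥(Metric.closedBall (0 : X) 1) →ᵇ Y) (hf : ‖f‖ ≤ 1)
    (y : Y) (hy : ‖y‖ ≤ 1) (n : ℕ) :
    ‖f + bumpMul (BoundedContinuousFunction.const _ y - f) n‖ ≤ 1 := by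
  rw [BoundedContinuousFunction.norm_le zero_le_one]
  intro x
  rw [BoundedContinuousFunction.add_apply, bumpMul_apply, BoundedContinuousFunction.sub_apply,
    BoundedContinuousFunction.const_apply]
  set t := bumpPsi n ‖(x : X)‖ with ht
  have h0 : 0 ≤ t := bumpPsi_nonneg _ _
  have h1 : t ≤ 1 := bumpPsi_le_one _ _
  have hfx : ‖f x‖ ≤ 1 := (f.norm_coe_le_norm x).trans hf
  have e : f x + (t : ℂ) • (y - f x) = ((1 - t : ℝ) : ℂ) • f x + (t : ℂ) • y := by
    rw [Complex.ofReal_sub, Complex.ofReal_one]; module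
  rw [e]
  refine (norm_add_le _ _).trans ?_
  rw [norm_smul, norm_smul, Complex.norm_real, Complex.norm_real, Real.norm_of_nonneg h0,
    Real.norm_of_nonneg (sub_nonneg.2 h1)]
  nlinarith

end

/- STATEMENT 11: For nontrivial complex Banach spaces `X` and `Y`, the Banach space
`C_b(B_X, Y)` of bounded continuous `Y`-valued functions on the closed unit ball of
`X` has the diameter two property: every nonempty relatively weakly open subset of
its closed unit ball has diameter two. -/
theorem stmt_11 {X Y : Type*}
    [NormedAddCommGroup X] [NormedSpace ℂ X] [CompleteSpace X] [Nontrivial X]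
    [NormedAddCommGroup Y] [NormedSpace ℂ Y] [CompleteSpace Y] [Nontrivial Y] :
    ∀ W : Set (WeakSpace ℂ (↥(Metric.closedBall (0 : X) 1) →ᵇ Y)), IsOpen W →
      ((⇑(toWeakSpace ℂ (↥(Metric.closedBall (0 : X) 1) →ᵇ Y)) ⁻¹' W) ∩
        Metric.closedBall (0 : ↥(Metric.closedBall (0 : X) 1) →ᵇ Y) 1).Nonempty →
      Metric.diam ((⇑(toWeakSpace ℂ (↥(Metric.closedBall (0 : X) 1) →ᵇ Y)) ⁻¹' W) ∩
        Metric.closedBall (0 : ↥(Metric.closedBall (0 : X) 1) →ᵇ Y) 1) = 2 := by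
  intro W hW hne
  obtain ⟨f, hfW, hfB⟩ := hne
  have hf : ‖f‖ ≤ 1 := by simpa using hfB
  let _ : NormedSpace ℝ X := NormedSpace.complexToReal
  let _ : NormedSpace ℝ Y := NormedSpace.complexToReal
  obtain ⟨v, hv⟩ := exists_norm_eq X (zero_le_one (α := ℝ))
  obtain ⟨y, hy⟩ := exists_norm_eq Y (zero_le_one (α := ℝ))
  apply le_antisymm
  · refine (Metric.diam_mono Set.inter_subset_right Metric.isBounded_closedBall).trans ?_
    simpa using Metric.diam_closedBall
      (x := (0 : ↥(Metric.closedBall (0 : X) 1) →ᵇ Y)) (zero_le_one (α := ℝ))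
  · obtain ⟨n, hn1, hn2⟩ := ((bumpMul_eventually f
      (BoundedContinuousFunction.const _ y - f) W hW hfW).and (bumpMul_eventually f
      (BoundedContinuousFunction.const _ (-y) - f) W hW hfW)).exists
    have m1 : f + bumpMul (BoundedContinuousFunction.const _ y - f) n ∈
        ((⇑(toWeakSpace ℂ (↥(Metric.closedBall (0 : X) 1) →ᵇ Y)) ⁻¹' W) ∩
        Metric.closedBall (0 : ↥(Metric.closedBall (0 : X) 1) →ᵇ Y) 1) :=
      ⟨hn1, mem_closedBall_zero_iff.2 (bump_norm_le f hf y hy.le n)⟩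
    have m2 : f + bumpMul (BoundedContinuousFunction.const _ (-y) - f) n ∈
        ((⇑(toWeakSpace ℂ (↥(Metric.closedBall (0 : X) 1) →ᵇ Y)) ⁻¹' W) ∩
        Metric.closedBall (0 : ↥(Metric.closedBall (0 : X) 1) →ᵇ Y) 1) :=
      ⟨hn2, mem_closedBall_zero_iff.2 (bump_norm_le f hf (-y) (by rw [norm_neg]; exact hy.le) n)⟩
    refine le_trans ?_ (Metric.dist_le_diam_of_mem
      (Metric.isBounded_closedBall.subset Set.inter_subset_right) m1 m2)
    have hnorm : ‖((2 : ℝ) ^ n)⁻¹ • v‖ = ((2 : ℝ) ^ n)⁻¹ := by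
      rw [norm_smul, hv, mul_one, Real.norm_of_nonneg (by positivity)]
    have hx : ((2 : ℝ) ^ n)⁻¹ • v ∈ Metric.closedBall (0 : X) 1 := by
      rw [mem_closedBall_zero_iff, hnorm]
      exact inv_le_one_of_one_le₀ (one_le_pow₀ (by norm_num))
    have hpsi : bumpPsi n ‖((2 : ℝ) ^ n)⁻¹ • v‖ = 1 := by
      rw [hnorm, bumpPsi, mul_inv_cancel₀ (by positivity)]
      norm_num
    refine le_trans ?_ (BoundedContinuousFunction.dist_coe_le_dist
      (f := f + bumpMul (BoundedContinuousFunction.const _ y - f) n)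
      (g := f + bumpMul (BoundedContinuousFunction.const _ (-y) - f) n)
      (⟨((2 : ℝ) ^ n)⁻¹ • v, hx⟩ : ↥(Metric.closedBall (0 : X) 1)))
    simp only [BoundedContinuousFunction.add_apply, bumpMul_apply,
      BoundedContinuousFunction.sub_apply, BoundedContinuousFunction.const_apply, hpsi]
    rw [dist_eq_norm]
    have e : ∀ z : Y, (z + ((1 : ℝ) : ℂ) • (y - z)) - (z + ((1 : ℝ) : ℂ) • (-y - z))
        = (2 : ℂ) • y := by
      intro z
      rw [Complex.ofReal_one]; module
    rw [e, norm_smul, hy]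
    norm_num
end
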